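/- Let E₀ = { (−cos φ, 0, sin φ) : φ ∈ [−π/2, π/2] } ⊆ S² be a closed half great circle, and let K ⊆ E₀ be a closed set with Λ(K) = 3/4. Then K = E₀. -/

import Mathlib

open MeasureTheory Metric Set Filter
open scoped ENNReal NNReal Topology

noncomputable section

/-- `ℝ^N` as a Euclidean space. -/
abbrev Rn (N : ℕ) := EuclideanSpace ℝ (Fin N)

/-- `u` is locally Lipschitz on the set `s` (neighborhoods taken within `s`). -/
def LocLipOn (N : ℕ) (u : Rn N → ℝ) (s : Set (Rn N)) : Prop :=
  ∀ x ∈ s, ∃ t ∈ nhdsWithin x s, ∃ C : ℝ≥0, LipschitzOnWith C u t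

/-- The unit sphere `S² ⊆ ℝ³`. -/
def S2 : Set (Rn 3) := sphere (0 : Rn 3) 1

/-- The open cone (with vertex removed) over a subset `U` of the sphere. -/
def coneOver (U : Set (Rn 3)) : Set (Rn 3) :=
  {z | ∃ t : ℝ, 0 < t ∧ ∃ y ∈ U, z = t • y}

/-- Admissible test functions for the Rayleigh quotient on `S² ∖ K`: a locally Lipschitz
function on `S² ∖ K` is encoded by its radially `0`-homogeneous extension `g` (so that
the ambient gradient of `g` at points of the sphere is the tangential gradient `∇_τ`),
with `0 < ∫_{S²} g² dH² < ∞`, finite tangential energy on `S² ∖ K`, and zero mean. -/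
def SphAdmissible (K : Set (Rn 3)) (g : Rn 3 → ℝ) : Prop :=
  (∀ (y : Rn 3) (t : ℝ), 0 < t → g (t • y) = g y) ∧
  LocLipOn 3 g (coneOver (S2 \ K)) ∧
  0 < (∫⁻ y in S2, ENNReal.ofReal ((g y) ^ 2) ∂μH[(2 : ℝ)]) ∧
  (∫⁻ y in S2, ENNReal.ofReal ((g y) ^ 2) ∂μH[(2 : ℝ)]) < ⊤ ∧
  (∫⁻ y in S2 \ K, ENNReal.ofReal (‖gradient g y‖ ^ 2) ∂μH[(2 : ℝ)]) < ⊤ ∧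
  (∫ y in S2, g y ∂μH[(2 : ℝ)]) = 0

/-- `Λ(K)`: the infimum of the Rayleigh quotients
`∫_{S² ∖ K} |∇_τ u|² dH² / ∫_{S²} u² dH²` over admissible `u`; for `S² ∖ K` connected
this is the first nonzero Neumann eigenvalue of the Laplace–Beltrami operator
on `S² ∖ K`. -/
def Lam (K : Set (Rn 3)) : ℝ≥0∞ :=
  sInf { q : ℝ≥0∞ | ∃ g : Rn 3 → ℝ, SphAdmissible K g ∧
    q = (∫⁻ y in S2 \ K, ENNReal.ofReal (‖gradient g y‖ ^ 2) ∂μH[(2 : ℝ)]) /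
        (∫⁻ y in S2, ENNReal.ofReal ((g y) ^ 2) ∂μH[(2 : ℝ)]) }

/-- The closed half great circle `E₀ = {(-cos φ, 0, sin φ) : φ ∈ [-π/2, π/2]} ⊆ S²`. -/
def halfCircle : Set (Rn 3) :=
  {x | ∃ φ : ℝ, φ ∈ Icc (-(Real.pi / 2)) (Real.pi / 2) ∧
    x 0 = -Real.cos φ ∧ x 1 = 0 ∧ x 2 = Real.sin φ}

/-!
In cylindrical coordinates `(θ, s)`, with longitude `θ ∈ (-π, π)` and height `s ∈ (-1, 1)`, the
area of the sphere is Lebesgue measure (Archimedes), the Dirichlet energy of `u` is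
`∫ (1 - s²) u_s² + u_θ² / (1 - s²)`, and the half circle `E₀` is the cut `θ = ±π`. Since `H²` on
the sphere is rotation invariant, it agrees with this area up to a constant factor, which cancels
in Rayleigh quotients.

Split a test function of mean zero into its parts even and odd under `θ ↦ -θ`. On the half sphere
`0 < θ < π` the even part has mean zero and its Rayleigh quotient is at least `1`, which follows
from the Poincaré inequalities in `θ` and in `s` separately by tensorization of the variance. The
odd part vanishes at `θ = 0`, so that Wirtinger's inequality in `θ` bounds `∫ u_θ²` below by
`(1/4) ∫ u²`, and the remaining Legendre form in `s` has lowest eigenvalue `3/4`. If `K ≠ E₀`, then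
`K` misses the part of `E₀` over an interval `(α, β)` of heights; there the odd part also vanishes
at `θ = π`, the constant `1/4` improves to `1`, and a perturbation of the Riccati function `s / 2`
of the Legendre form shows that the lowest eigenvalue is raised above `3/4`. Hence
`Λ(K) ≥ 3/4 + δ` for some `δ > 0`.
-/
/-! ### One-dimensional inequalities -/

lemma ofReal_integral_le_lintegral_ofReal {X : Type*} [MeasurableSpace X] {μ : Measure X}
    {f : X → ℝ} (hf : Integrable f μ) :
    ENNReal.ofReal (∫ x, f x ∂μ) ≤ ∫⁻ x, ENNReal.ofReal (f x) ∂μ := by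
  rw [integral_eq_lintegral_pos_part_sub_lintegral_neg_part hf]
  exact ENNReal.ofReal_le_of_le_toReal (sub_le_self _ ENNReal.toReal_nonneg)

lemma ofReal_intervalIntegral_le_setLIntegral_ofReal {f : ℝ → ℝ} {a b : ℝ} (hab : a ≤ b)
    (hf : IntervalIntegrable f volume a b) :
    ENNReal.ofReal (∫ x in a..b, f x) ≤ ∫⁻ x in Ioc a b, ENNReal.ofReal (f x) := by
  rw [intervalIntegral.integral_of_le hab]
  exact ofReal_integral_le_lintegral_ofReal hf.1

lemma setLIntegral_Ioc_ofReal {f : ℝ → ℝ} {a b : ℝ} (hab : a ≤ b)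
    (hf : IntervalIntegrable f volume a b) (hf0 : ∀ x ∈ Ioc a b, 0 ≤ f x) :
    ∫⁻ x in Ioc a b, ENNReal.ofReal (f x) = ENNReal.ofReal (∫ x in a..b, f x) := by
  rw [intervalIntegral.integral_of_le hab]
  exact (ofReal_integral_eq_lintegral_ofReal hf.1
    (ae_restrict_of_forall_mem measurableSet_Ioc hf0)).symm

lemma setLIntegral_Ioo_le_of_forall_Ioc {F : ℝ → ℝ≥0∞} {c : ℝ≥0∞} {l r : ℝ}
    (h : ∀ a ∈ Ioo l r, ∀ b ∈ Ioo l r, a < b → ∫⁻ x in Ioc a b, F x ≤ c) :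
    ∫⁻ x in Ioo l r, F x ≤ c := by
  rcases le_or_gt r l with hlr | hlr
  · simp [Ioo_eq_empty hlr.not_gt]
  obtain ⟨m, hlm, hmr⟩ := exists_between hlr
  obtain ⟨u, hu_anti, hu, hu_tendsto⟩ := exists_seq_strictAnti_tendsto' hlm
  obtain ⟨v, hv_mono, hv, hv_tendsto⟩ := exists_seq_strictMono_tendsto' hmr
  have hcover : Ioo l r = ⋃ n, Ioc (u n) (v n) := by
    refine Subset.antisymm (fun x hx ↦ ?_) (iUnion_subset fun n x hx ↦
      ⟨(hu n).1.trans hx.1, hx.2.trans_lt (hv n).2⟩)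
    obtain ⟨n, hun, hvn⟩ := ((hu_tendsto.eventually_lt_const hx.1).and
      (hv_tendsto.eventually_const_lt hx.2)).exists
    exact mem_iUnion.2 ⟨n, hun, hvn.le⟩
  have hmono : Monotone fun n ↦ Ioc (u n) (v n) := fun n k hnk ↦
    Ioc_subset_Ioc (hu_anti.antitone hnk) (hv_mono.monotone hnk)
  rw [hcover, setLIntegral_iUnion_of_directed _ hmono.directed_le]
  exact iSup_le fun n ↦ h _ ⟨(hu n).1, (hu n).2.trans hmr⟩ _ ⟨hlm.trans (hv n).1, (hv n).2⟩
    ((hu n).2.trans (hv n).1)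

lemma locallyLipschitzOn_of_hasDerivAt {F : Type*} [NormedAddCommGroup F] [NormedSpace ℝ F]
    {p p' : ℝ → F} {U : Set ℝ} (hU : IsOpen U) (hp : ∀ x ∈ U, HasDerivAt p (p' x) x)
    (hp' : ContinuousOn p' U) :
    LocallyLipschitzOn U p := by
  have hdiff : ContDiffOn ℝ 1 p U := by
    rw [show (1 : WithTop ℕ∞) = 0 + 1 from rfl, contDiffOn_succ_iff_deriv_of_isOpen hU]
    refine ⟨fun x hx ↦ (hp x hx).differentiableAt.differentiableWithinAt, by simp, ?_⟩
    exact contDiffOn_zero.2 (hp'.congr fun x hx ↦ (hp x hx).deriv)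
  intro x hx
  obtain ⟨C, t, ht, hC⟩ := (hdiff.contDiffAt (hU.mem_nhds hx)).exists_lipschitzOnWith
  exact ⟨C, t, nhdsWithin_le_nhds ht, hC⟩

lemma absolutelyContinuousOnInterval_of_locallyLipschitzOn {f : ℝ → ℝ} {S : Set ℝ} {a b : ℝ}
    (hf : LocallyLipschitzOn S f) (hS : uIcc a b ⊆ S) :
    AbsolutelyContinuousOnInterval f a b := by
  obtain ⟨C, hC⟩ := (hf.mono hS).exists_lipschitzOnWith_of_compact isCompact_uIcc
  exact hC.absolutelyContinuousOnInterval

section Riccati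

variable {f p p' w q : ℝ → ℝ} {c l r : ℝ}

-- The function `p` plays the role of `-w φ' / φ` for a positive supersolution `φ` of
-- `-(w φ')' + q φ = c φ`: completing the square, `w f'² + q f² - c f² + (p f²)' ≥ 0`.
lemma mul_sq_sub_deriv_mul_sq_le_of_riccati {x : ℝ} (hf : DifferentiableAt ℝ f x)
    (hp : HasDerivAt p (p' x) x) (hw : 0 < w x) (hc : c ≤ p' x - p x ^ 2 / w x + q x) :
    c * f x ^ 2 - deriv (p * (f * f)) x ≤ w x * deriv f x ^ 2 + q x * f x ^ 2 := by
  have hderiv : deriv (p * (f * f)) x = p' x * f x ^ 2 + 2 * p x * f x * deriv f x := by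
    rw [(hp.mul (hf.hasDerivAt.mul hf.hasDerivAt)).deriv]
    simp only [Pi.mul_apply]
    ring
  have hsq : 0 ≤ (w x * deriv f x + p x * f x) ^ 2 / w x := by positivity
  have hsq_eq : (w x * deriv f x + p x * f x) ^ 2 / w x =
      w x * deriv f x ^ 2 + 2 * p x * f x * deriv f x + p x ^ 2 / w x * f x ^ 2 := by
    field_simp
    ring
  nlinarith [mul_le_mul_of_nonneg_right hc (sq_nonneg (f x))]

lemma setLIntegral_Ioc_sq_le_of_riccati (hf : LocallyLipschitzOn (Ioo l r) f)
    (hp : ∀ x ∈ Ioo l r, HasDerivAt p (p' x) x) (hp' : ContinuousOn p' (Ioo l r))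
    (hw : ∀ x ∈ Ioo l r, 0 < w x) (hc : ∀ x ∈ Ioo l r, c ≤ p' x - p x ^ 2 / w x + q x)
    (hc0 : 0 ≤ c) {a b : ℝ} (ha : a ∈ Ioo l r) (hb : b ∈ Ioo l r) (hab : a ≤ b) :
    ∫⁻ x in Ioc a b, ENNReal.ofReal (c * f x ^ 2) ≤
      (∫⁻ x in Ioo l r, ENNReal.ofReal (w x * deriv f x ^ 2 + q x * f x ^ 2)) +
        (ENNReal.ofReal (p b * f b ^ 2) + ENNReal.ofReal (-(p a * f a ^ 2))) := by
  have hsub : uIcc a b ⊆ Ioo l r := by rw [uIcc_of_le hab]; exact Icc_subset_Ioo ha.1 hb.2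
  have hsub' : Ioc a b ⊆ Ioo l r := Ioc_subset_Icc_self.trans (uIcc_of_le hab ▸ hsub)
  have hfac := absolutelyContinuousOnInterval_of_locallyLipschitzOn hf hsub
  have hpff := (absolutelyContinuousOnInterval_of_locallyLipschitzOn
    (locallyLipschitzOn_of_hasDerivAt isOpen_Ioo hp hp') hsub).mul (hfac.mul hfac)
  have hf2 : IntervalIntegrable (fun x ↦ c * f x ^ 2) volume a b :=
    ((hf.continuousOn.mono hsub).pow 2).intervalIntegrable.const_mul c
  have hftc : ∫ x in a..b, c * f x ^ 2 = (∫ x in a..b, (c * f x ^ 2 - deriv (p * (f * f)) x)) +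
      (p b * f b ^ 2 + -(p a * f a ^ 2)) := by
    rw [intervalIntegral.integral_sub hf2 hpff.intervalIntegrable_deriv,
      hpff.integral_deriv_eq_sub]
    simp only [Pi.mul_apply]
    ring
  rw [setLIntegral_Ioc_ofReal hab hf2 fun x _ ↦ by positivity, hftc]
  refine ENNReal.ofReal_add_le.trans (add_le_add ?_ ENNReal.ofReal_add_le)
  refine (ofReal_intervalIntegral_le_setLIntegral_ofReal hab
    (hf2.sub hpff.intervalIntegrable_deriv)).trans ?_
  refine (lintegral_mono_ae ?_).trans (lintegral_mono_set hsub')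
  filter_upwards [ae_restrict_of_ae hfac.ae_differentiableAt, ae_restrict_mem measurableSet_Ioc]
    with x hfx hx
  have hxm : x ∈ uIcc a b := uIcc_of_le hab ▸ Ioc_subset_Icc_self hx
  exact ENNReal.ofReal_le_ofReal (mul_sq_sub_deriv_mul_sq_le_of_riccati (hfx hxm)
    (hp x (hsub hxm)) (hw x (hsub hxm)) (hc x (hsub hxm)))

theorem setLIntegral_Ioo_sq_le_of_riccati (hf : LocallyLipschitzOn (Ioo l r) f)
    (hp : ∀ x ∈ Ioo l r, HasDerivAt p (p' x) x) (hp' : ContinuousOn p' (Ioo l r))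
    (hw : ∀ x ∈ Ioo l r, 0 < w x) (hc : ∀ x ∈ Ioo l r, c ≤ p' x - p x ^ 2 / w x + q x)
    (hc0 : 0 ≤ c) (hl : ∀ η > 0, ∃ᶠ a in 𝓝[>] l, -(p a * f a ^ 2) ≤ η)
    (hr : ∀ η > 0, ∃ᶠ b in 𝓝[<] r, p b * f b ^ 2 ≤ η) :
    ENNReal.ofReal c * ∫⁻ x in Ioo l r, ENNReal.ofReal (f x ^ 2) ≤
      ∫⁻ x in Ioo l r, ENNReal.ofReal (w x * deriv f x ^ 2 + q x * f x ^ 2) := by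
  simp only [← lintegral_const_mul' _ _ ENNReal.ofReal_ne_top, ← ENNReal.ofReal_mul hc0]
  refine ENNReal.le_of_forall_pos_le_add fun ε hε _ ↦
    setLIntegral_Ioo_le_of_forall_Ioc fun a ha b hb hab ↦ ?_
  have hε2 : (0 : ℝ) < ε / 2 := by positivity
  obtain ⟨a', hpa, ha'⟩ := ((hl _ hε2).and_eventually (Ioo_mem_nhdsGT ha.1)).exists
  obtain ⟨b', hpb, hb'⟩ := ((hr _ hε2).and_eventually (Ioo_mem_nhdsLT hb.2)).exists
  have hbdry : ENNReal.ofReal (p b' * f b' ^ 2) + ENNReal.ofReal (-(p a' * f a' ^ 2)) ≤ ε := by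
    grw [hpa, hpb, ← ENNReal.ofReal_add hε2.le hε2.le, add_halves, ENNReal.ofReal_coe_nnreal]
  grw [← hbdry, Ioc_subset_Ioc ha'.2.le hb'.1.le]
  exact setLIntegral_Ioc_sq_le_of_riccati hf hp hp' hw hc hc0 ⟨ha'.1, ha'.2.trans ha.2⟩
    ⟨hb.1.trans hb'.1, hb'.2⟩ (ha'.2.trans (hab.trans hb'.1)).le

end Riccati

section Wirtinger

variable {f : ℝ → ℝ} {k L : ℝ}

lemma mul_cot_mul_sq_le {C y v : ℝ} (hk : 0 < k) (hy : 0 < y) (hky : k * y < Real.pi / 2)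
    (hv : |v| ≤ C * y) : k * Real.cot (k * y) * v ^ 2 ≤ C ^ 2 * y := by
  have htan := Real.lt_tan (mul_pos hk hy) hky
  have hcot : k * Real.cot (k * y) * y ≤ 1 := by
    rw [← Real.tan_inv_eq_cot, mul_right_comm]
    exact mul_inv_le_one_of_le₀ htan.le ((mul_pos hk hy).trans htan).le
  have hcot0 : 0 ≤ Real.cot (k * y) := by
    rw [← Real.tan_inv_eq_cot]
    exact inv_nonneg.2 ((mul_pos hk hy).trans htan).le
  calc k * Real.cot (k * y) * v ^ 2 ≤ k * Real.cot (k * y) * (C * y) ^ 2 := by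
        rw [← sq_abs v]
        gcongr
    _ = k * Real.cot (k * y) * y * (C ^ 2 * y) := by ring
    _ ≤ C ^ 2 * y := mul_le_of_le_one_left (by positivity) hcot

lemma eventually_mul_cot_mul_sq_le (hk : 0 < k) {C : ℝ} (hf : ∀ᶠ y in 𝓝[>] 0, |f y| ≤ C * y)
    {η : ℝ} (hη : 0 < η) : ∀ᶠ y in 𝓝[>] 0, k * Real.cot (k * y) * f y ^ 2 ≤ η := by
  have hsmall : ∀ᶠ y in 𝓝[>] (0 : ℝ), C ^ 2 * y ≤ η ∧ k * y < Real.pi / 2 := by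
    have hcont (m : ℝ) : Tendsto (fun y ↦ m * y) (𝓝[>] (0 : ℝ)) (𝓝 0) :=
      tendsto_nhdsWithin_of_tendsto_nhds (by simpa using (continuous_const_mul m).tendsto 0)
    exact ((hcont _).eventually_le_const hη).and ((hcont _).eventually_lt_const (by positivity))
  filter_upwards [hf, hsmall, self_mem_nhdsWithin] with y hfy hy hy0
  exact (mul_cot_mul_sq_le hk hy0 hy.2 hfy).trans hy.1

lemma wirtinger_of_right_boundary (hk : 0 < k) (hkL : k * L ≤ Real.pi)
    (hf : LocallyLipschitzOn (Ioo 0 L) f) (h0 : ∃ C, ∀ᶠ x in 𝓝[>] 0, |f x| ≤ C * x)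
    (hL : ∀ η > 0, ∃ᶠ x in 𝓝[<] L, -(k * Real.cot (k * x)) * f x ^ 2 ≤ η) :
    ENNReal.ofReal (k ^ 2) * ∫⁻ x in Ioo 0 L, ENNReal.ofReal (f x ^ 2) ≤
      ∫⁻ x in Ioo 0 L, ENNReal.ofReal (deriv f x ^ 2) := by
  obtain ⟨C, hC⟩ := h0
  have hsin : ∀ x ∈ Ioo 0 L, Real.sin (k * x) ≠ 0 := fun x hx ↦
    (Real.sin_pos_of_pos_of_lt_pi (mul_pos hk hx.1)
      ((mul_lt_mul_of_pos_left hx.2 hk).trans_le hkL)).ne'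
  have hcot : ∀ x ∈ Ioo 0 L, HasDerivAt (fun x ↦ -(k * Real.cot (k * x)))
      (k ^ 2 / Real.sin (k * x) ^ 2) x := fun x hx ↦ by
    have hk' : HasDerivAt (fun x ↦ k * x) k x := by simpa using (hasDerivAt_id x).const_mul k
    simp only [Real.cot_eq_cos_div_sin]
    refine ((hk'.cos.div hk'.sin (hsin x hx)).const_mul k).neg.congr_deriv ?_
    have := hsin x hx
    field_simp
    linear_combination Real.sin_sq_add_cos_sq (k * x)
  have hriccati := setLIntegral_Ioo_sq_le_of_riccati (w := 1) (q := 0) (c := k ^ 2) hf hcot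
    (ContinuousOn.div (by fun_prop) (by fun_prop) fun x hx ↦ pow_ne_zero 2 (hsin x hx))
    (fun _ _ ↦ one_pos) (fun x hx ↦ ?_) (sq_nonneg k)
    (fun η hη ↦ ?_) hL
  · simpa using hriccati
  · have := hsin x hx
    rw [Real.cot_eq_cos_div_sin, Pi.one_apply, Pi.zero_apply, div_one, add_zero]
    apply le_of_eq
    field_simp
    linear_combination Real.sin_sq_add_cos_sq (k * x)
  · simpa using (eventually_mul_cot_mul_sq_le hk hC hη).frequently

theorem wirtinger_of_left_zero (hk : 0 < k) (hkL : k * L ≤ Real.pi / 2)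
    (hf : LocallyLipschitzOn (Ioo 0 L) f) (h0 : ∃ C, ∀ᶠ x in 𝓝[>] 0, |f x| ≤ C * x) :
    ENNReal.ofReal (k ^ 2) * ∫⁻ x in Ioo 0 L, ENNReal.ofReal (f x ^ 2) ≤
      ∫⁻ x in Ioo 0 L, ENNReal.ofReal (deriv f x ^ 2) := by
  rcases le_or_gt L 0 with hL | hL
  · simp [Ioo_eq_empty hL.not_gt]
  refine wirtinger_of_right_boundary hk (by linarith [Real.pi_pos]) hf h0 fun η hη ↦ ?_
  refine Eventually.frequently ?_
  filter_upwards [Ioo_mem_nhdsLT hL] with x hx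
  have hkx : k * x ≤ Real.pi / 2 := (mul_le_mul_of_nonneg_left hx.2.le hk.le).trans hkL
  have hcot : 0 ≤ Real.cot (k * x) := by
    rw [← Real.tan_inv_eq_cot]
    exact inv_nonneg.2 (Real.tan_nonneg_of_nonneg_of_le_pi_div_two (mul_pos hk hx.1).le hkx)
  have : 0 ≤ k * Real.cot (k * x) * f x ^ 2 := by positivity
  linarith

theorem wirtinger_of_zeros (hk : 0 < k) (hkL : k * L = Real.pi)
    (hf : LocallyLipschitzOn (Ioo 0 L) f) (h0 : ∃ C, ∀ᶠ x in 𝓝[>] 0, |f x| ≤ C * x)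
    (hL : ∃ C, ∀ᶠ x in 𝓝[<] L, |f x| ≤ C * (L - x)) :
    ENNReal.ofReal (k ^ 2) * ∫⁻ x in Ioo 0 L, ENNReal.ofReal (f x ^ 2) ≤
      ∫⁻ x in Ioo 0 L, ENNReal.ofReal (deriv f x ^ 2) := by
  obtain ⟨C, hC⟩ := hL
  refine wirtinger_of_right_boundary hk hkL.le hf h0 fun η hη ↦ Eventually.frequently ?_
  have hreflect : Tendsto (fun y ↦ L - y) (𝓝[<] L) (𝓝[>] 0) :=
    tendsto_nhdsWithin_iff.2 ⟨tendsto_nhdsWithin_of_tendsto_nhds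
      (by simpa using (continuous_sub_left L).tendsto L), by
        filter_upwards [self_mem_nhdsWithin] with x hx using mem_Ioi.2 (sub_pos.2 hx)⟩
  have hreflect' : Tendsto (fun y ↦ L - y) (𝓝[>] 0) (𝓝[<] L) :=
    tendsto_nhdsWithin_iff.2 ⟨tendsto_nhdsWithin_of_tendsto_nhds
      (by simpa using (continuous_sub_left L).tendsto 0), by
        filter_upwards [self_mem_nhdsWithin] with x hx using mem_Iio.2 (sub_lt_self L hx)⟩
  have hC' : ∀ᶠ y in 𝓝[>] 0, |f (L - y)| ≤ C * y := by simpa using hreflect'.eventually hC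
  filter_upwards [hreflect.eventually (eventually_mul_cot_mul_sq_le hk hC' hη)] with x hx
  have hcot : Real.cot (k * (L - x)) = -Real.cot (k * x) := by
    rw [mul_sub, hkL, Real.cot_eq_cos_div_sin, Real.cot_eq_cos_div_sin, Real.cos_pi_sub,
      Real.sin_pi_sub, neg_div]
  simpa [hcot] using hx

end Wirtinger

section Legendre

lemma lintegral_Ioo_inv_abs_sub_eq_top {l r c : ℝ} (hlr : l < r) (hc : c ∈ Icc l r) :
    ∫⁻ x in Ioo l r, ENNReal.ofReal |x - c|⁻¹ = ⊤ := by
  by_contra hfin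
  have hint : IntervalIntegrable (fun x ↦ (x - c)⁻¹) volume l r := by
    rw [intervalIntegrable_iff_integrableOn_Ioo_of_le hlr.le]
    refine ⟨by fun_prop, ?_⟩
    simpa only [hasFiniteIntegral_iff_norm, norm_inv, Real.norm_eq_abs] using
      lt_top_iff_ne_top.2 hfin
  rw [intervalIntegrable_sub_inv_iff, uIcc_of_le hlr.le] at hint
  exact hint.elim hlr.ne (· hc)

lemma exists_mem_Ioo_le_of_lintegral_ne_top {F : ℝ → ℝ} {l r c : ℝ} (hlr : l < r)
    (hc : c ∈ Icc l r) (hF : ∫⁻ x in Ioo l r, ENNReal.ofReal (F x / |x - c|) ≠ ⊤) {η : ℝ}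
    (hη : 0 < η) : ∃ x ∈ Ioo l r, F x ≤ η := by
  by_contra! hlt
  refine hF (top_unique ?_)
  calc ⊤ = ENNReal.ofReal η * ∫⁻ x in Ioo l r, ENNReal.ofReal |x - c|⁻¹ := by
        rw [lintegral_Ioo_inv_abs_sub_eq_top hlr hc, ENNReal.mul_top (by simpa using hη)]
    _ = ∫⁻ x in Ioo l r, ENNReal.ofReal (η / |x - c|) := by
        simp only [← lintegral_const_mul' _ _ ENNReal.ofReal_ne_top, ← ENNReal.ofReal_mul hη.le,
          div_eq_mul_inv]
    _ ≤ ∫⁻ x in Ioo l r, ENNReal.ofReal (F x / |x - c|) :=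
        setLIntegral_mono' measurableSet_Ioo fun x hx ↦ by gcongr; exact (hlt x hx).le

lemma one_sub_sq_pos_of_mem {s : ℝ} (hs : s ∈ Ioo (-1 : ℝ) 1) : 0 < 1 - s ^ 2 :=
  sub_pos.2 ((sq_lt_one_iff_abs_lt_one s).2 (abs_lt.2 hs))

lemma sqrt_one_sub_sq_pos {s : ℝ} (hs : s ∈ Ioo (-1 : ℝ) 1) : 0 < √(1 - s ^ 2) :=
  Real.sqrt_pos.2 (one_sub_sq_pos_of_mem hs)

lemma sq_sqrt_one_sub_sq {s : ℝ} (hs : s ∈ Ioo (-1 : ℝ) 1) : √(1 - s ^ 2) ^ 2 = 1 - s ^ 2 :=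
  Real.sq_sqrt (one_sub_sq_pos_of_mem hs).le

lemma div_abs_sub_le_two_mul_div_one_sub_sq {c v s : ℝ} (hc : |c| = 1) (hv : 0 ≤ v)
    (hs : s ∈ Ioo (-1 : ℝ) 1) : v / |s - c| ≤ 2 * (v / (1 - s ^ 2)) := by
  have hw := one_sub_sq_pos_of_mem hs
  have hsc : 1 - s ^ 2 ≤ 2 * |s - c| := by
    have hfactor : 1 - s ^ 2 = |s - c| * |s + c| := by
      rw [← abs_mul, ← abs_neg, ← abs_of_pos hw, ← one_pow 2, ← hc, sq_abs]
      ring_nf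
    have hle : |s + c| ≤ 2 := (abs_add_le s c).trans (by linarith [abs_lt.2 hs])
    rw [hfactor, mul_comm]
    gcongr
  have hpos : 0 < |s - c| := by linarith
  rw [← mul_div_assoc, div_le_div_iff₀ hpos hw]
  nlinarith [mul_le_mul_of_nonneg_left hsc hv]

variable {f : ℝ → ℝ}

lemma exists_sq_le_of_lintegral_div_one_sub_sq_ne_top
    (hf : ∫⁻ s in Ioo (-1 : ℝ) 1, ENNReal.ofReal (f s ^ 2 / (1 - s ^ 2)) ≠ ⊤) {l r c : ℝ}
    (hl : -1 ≤ l) (hr : r ≤ 1) (hlr : l < r) (hc : c ∈ Icc l r) (hc1 : |c| = 1) {η : ℝ}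
    (hη : 0 < η) : ∃ s ∈ Ioo l r, f s ^ 2 ≤ η := by
  refine exists_mem_Ioo_le_of_lintegral_ne_top hlr hc (ne_top_of_le_ne_top
    (ENNReal.mul_ne_top (ENNReal.ofReal_ne_top (r := 2)) hf) ?_) hη
  calc ∫⁻ s in Ioo l r, ENNReal.ofReal (f s ^ 2 / |s - c|)
      ≤ ∫⁻ s in Ioo (-1 : ℝ) 1, ENNReal.ofReal (f s ^ 2 / |s - c|) :=
        lintegral_mono_set (Ioo_subset_Ioo hl hr)
    _ ≤ ∫⁻ s in Ioo (-1 : ℝ) 1, ENNReal.ofReal 2 * ENNReal.ofReal (f s ^ 2 / (1 - s ^ 2)) :=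
        setLIntegral_mono' measurableSet_Ioo fun s hs ↦ by
          rw [← ENNReal.ofReal_mul zero_le_two]
          exact ENNReal.ofReal_le_ofReal
            (div_abs_sub_le_two_mul_div_one_sub_sq hc1 (sq_nonneg _) hs)
    _ = _ := lintegral_const_mul' _ _ ENNReal.ofReal_ne_top

lemma frequently_nhdsGT_neg_one_sq_le
    (hf : ∫⁻ s in Ioo (-1 : ℝ) 1, ENNReal.ofReal (f s ^ 2 / (1 - s ^ 2)) ≠ ⊤) {η : ℝ}
    (hη : 0 < η) : ∃ᶠ s in 𝓝[>] (-1 : ℝ), f s ^ 2 ≤ η := by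
  refine (nhdsGT_basis (-1 : ℝ)).frequently_iff.2 fun {r} hr ↦ ?_
  obtain ⟨s, hs, hfs⟩ := exists_sq_le_of_lintegral_div_one_sub_sq_ne_top hf le_rfl
    (min_le_right r 1) (lt_min hr (by norm_num)) ⟨le_rfl, by simp [hr.le]⟩ (by simp) hη
  exact ⟨s, ⟨hs.1, hs.2.trans_le (min_le_left _ _)⟩, hfs⟩

lemma frequently_nhdsLT_one_sq_le
    (hf : ∫⁻ s in Ioo (-1 : ℝ) 1, ENNReal.ofReal (f s ^ 2 / (1 - s ^ 2)) ≠ ⊤) {η : ℝ}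
    (hη : 0 < η) : ∃ᶠ s in 𝓝[<] (1 : ℝ), f s ^ 2 ≤ η := by
  refine (nhdsLT_basis (1 : ℝ)).frequently_iff.2 fun {l} hl ↦ ?_
  obtain ⟨s, hs, hfs⟩ := exists_sq_le_of_lintegral_div_one_sub_sq_ne_top hf
    (le_max_right l (-1)) le_rfl (max_lt hl (by norm_num)) ⟨by simp [hl.le], le_rfl⟩ (by simp) hη
  exact ⟨s, ⟨(le_max_left _ _).trans_lt hs.1, hs.2⟩, hfs⟩

lemma exists_hasDerivAt_eq_one_off_Ioo {l r α β : ℝ} (hα : l ≤ α) (hαβ : α < β) (hβ : β ≤ r) :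
    ∃ h h' : ℝ → ℝ, Continuous h' ∧ (∀ x, HasDerivAt h (h' x) x) ∧ h l = 0 ∧ h r = 0 ∧
      ∀ x ∉ Ioo α β, h' x = 1 := by
  set bump : ℝ → ℝ := fun x ↦ max ((x - α) * (β - x)) 0
  have hbump : Continuous bump := by fun_prop
  have hpos : 0 < ∫ x in l..r, bump x := by
    refine intervalIntegral.integral_pos (hα.trans_lt (hαβ.trans_le hβ)) hbump.continuousOn
      (fun x _ ↦ le_max_right _ _) ⟨(α + β) / 2, ⟨by linarith, by linarith⟩, ?_⟩
    exact lt_max_of_lt_left (mul_pos (by linarith) (by linarith))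
  set h' : ℝ → ℝ := fun x ↦ 1 - (r - l) / (∫ x in l..r, bump x) * bump x
  have hh' : Continuous h' := by fun_prop
  refine ⟨fun x ↦ ∫ y in l..x, h' y, h', hh',
    fun x ↦ (hh'.integral_hasStrictDerivAt l x).hasDerivAt, intervalIntegral.integral_same, ?_,
    fun x hx ↦ ?_⟩
  · simp only [h']
    rw [intervalIntegral.integral_sub intervalIntegrable_const
      ((hbump.intervalIntegrable _ _).const_mul _),
      intervalIntegral.integral_const_mul, div_mul_cancel₀ _ hpos.ne']
    simp
  · have hx0 : (x - α) * (β - x) ≤ 0 := by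
      rcases not_and_or.1 hx with hx | hx
      · exact mul_nonpos_of_nonpos_of_nonneg (by linarith) (by linarith)
      · exact mul_nonpos_of_nonneg_of_nonpos (by linarith) (by linarith)
    simp [h', bump, max_eq_right hx0]

/-- The weight multiplying `f² / (1 - s²)` at height `s`: the Wirtinger constant on `(0, π)` is `1`
for a function vanishing at both ends (heights in the gap `(α, β)`) and `1 / 4` for a function
vanishing at `0` only (all other heights). -/
def gapWeight (α β s : ℝ) : ℝ := if s ∈ Ioo α β then 1 else 1 / 4

lemma one_div_four_le_gapWeight (α β s : ℝ) : 1 / 4 ≤ gapWeight α β s := by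
  unfold gapWeight
  split_ifs <;> norm_num

/-- The Riccati function `s / 2 + ε h / √(1 - s²)`, a perturbation of the function `s / 2` coming
from the ground state `(1 - s²)^(1/4)` of the Legendre operator without gap. -/
def gapRiccati (ε : ℝ) (h : ℝ → ℝ) (s : ℝ) : ℝ := s / 2 + ε * (h s / √(1 - s ^ 2))

/-- The derivative of `gapRiccati ε h` when `h'` is the derivative of `h`. -/
def gapRiccatiDeriv (ε : ℝ) (h h' : ℝ → ℝ) (s : ℝ) : ℝ :=
  1 / 2 + ε * (h' s / √(1 - s ^ 2) + s * h s / √(1 - s ^ 2) ^ 3)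

lemma hasDerivAt_sqrt_one_sub_sq {s : ℝ} (hs : s ∈ Ioo (-1 : ℝ) 1) :
    HasDerivAt (fun s : ℝ ↦ √(1 - s ^ 2)) (-(s / √(1 - s ^ 2))) s := by
  have hpoly : HasDerivAt (fun s : ℝ ↦ 1 - s ^ 2) (-(2 * s)) s := by
    simpa using (hasDerivAt_pow 2 s).const_sub 1
  refine (hpoly.sqrt (one_sub_sq_pos_of_mem hs).ne').congr_deriv ?_
  field_simp

lemma hasDerivAt_gapRiccati {ε s : ℝ} {h h' : ℝ → ℝ} (hs : s ∈ Ioo (-1 : ℝ) 1)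
    (hh : HasDerivAt h (h' s) s) :
    HasDerivAt (gapRiccati ε h) (gapRiccatiDeriv ε h h' s) s := by
  have hW : 0 < √(1 - s ^ 2) := sqrt_one_sub_sq_pos hs
  refine (((hasDerivAt_id s).div_const 2).add
    ((hh.div (hasDerivAt_sqrt_one_sub_sq hs) hW.ne').const_mul ε)).congr_deriv ?_
  unfold gapRiccatiDeriv
  field_simp
  ring

lemma continuousOn_gapRiccatiDeriv {ε : ℝ} {h h' : ℝ → ℝ} (hh : Continuous h)
    (hh' : Continuous h') : ContinuousOn (gapRiccatiDeriv ε h h') (Ioo (-1) 1) := by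
  have hW : ∀ s ∈ Ioo (-1 : ℝ) 1, √(1 - s ^ 2) ≠ 0 := fun s hs ↦
    (sqrt_one_sub_sq_pos hs).ne'
  unfold gapRiccatiDeriv
  refine continuousOn_const.add (continuousOn_const.mul (ContinuousOn.add ?_ ?_))
  · exact ContinuousOn.div (by fun_prop) (by fun_prop) hW
  · exact ContinuousOn.div (by fun_prop) (by fun_prop) fun s hs ↦ pow_ne_zero 3 (hW s hs)

lemma gapRiccatiDeriv_sub_sq_div {ε s : ℝ} {h h' : ℝ → ℝ} (hs : s ∈ Ioo (-1 : ℝ) 1) :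
    gapRiccatiDeriv ε h h' s - gapRiccati ε h s ^ 2 / (1 - s ^ 2) =
      3 / 4 - 1 / 4 / (1 - s ^ 2) + ε * (h' s / √(1 - s ^ 2)) -
        ε ^ 2 * (h s / (1 - s ^ 2)) ^ 2 := by
  have hW : 0 < √(1 - s ^ 2) := sqrt_one_sub_sq_pos hs
  have hW2 : 1 - s ^ 2 = √(1 - s ^ 2) ^ 2 := (sq_sqrt_one_sub_sq hs).symm
  unfold gapRiccatiDeriv gapRiccati
  set W := √(1 - s ^ 2)
  have hs2 : s ^ 2 = 1 - W ^ 2 := by linarith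
  rw [hW2]
  field_simp
  linear_combination (-(4 * W ^ 2)) * hs2

section Bounds

variable {h h' : ℝ → ℝ} {M s : ℝ}

lemma abs_le_mul_one_sub_sq (hderiv : ∀ x, HasDerivAt h (h' x) x) (hl : h (-1) = 0) (hr : h 1 = 0)
    (hM : ∀ x ∈ Icc (-1 : ℝ) 1, |h' x| ≤ M) (hs : s ∈ Ioo (-1 : ℝ) 1) :
    |h s| ≤ M * (1 - s ^ 2) := by
  have hlip : ∀ c ∈ Icc (-1 : ℝ) 1, h c = 0 → |h s| ≤ M * |s - c| := fun c hc hc0 ↦ by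
    have := (convex_Icc (-1 : ℝ) 1).norm_image_sub_le_of_norm_hasDerivWithin_le
      (fun x _ ↦ (hderiv x).hasDerivWithinAt) hM hc (Ioo_subset_Icc_self hs)
    simpa [hc0] using this
  have hM0 : 0 ≤ M := (abs_nonneg _).trans (hM s (Ioo_subset_Icc_self hs))
  have hleft := hlip (-1) (by simp) hl
  have hright := hlip 1 (by simp) hr
  rw [abs_of_pos (show 0 < s - -1 by linarith [hs.1])] at hleft
  rw [abs_of_neg (show s - 1 < 0 by linarith [hs.2])] at hright
  rcases le_total s 0 with hs0 | hs0
  · exact hleft.trans (mul_le_mul_of_nonneg_left (by nlinarith [hs.1]) hM0)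
  · exact hright.trans (mul_le_mul_of_nonneg_left (by nlinarith [hs.2]) hM0)

lemma abs_gapRiccati_le_one {ε : ℝ} (hε : 0 ≤ ε) (hεM : ε * M ≤ 1 / 4)
    (hh : |h s| ≤ M * (1 - s ^ 2)) (hs : s ∈ Ioo (-1 : ℝ) 1) : |gapRiccati ε h s| ≤ 1 := by
  have hw := one_sub_sq_pos_of_mem hs
  have hW : 0 < √(1 - s ^ 2) := sqrt_one_sub_sq_pos hs
  have hW1 : √(1 - s ^ 2) ≤ 1 := Real.sqrt_le_one.2 (by linarith [sq_nonneg s])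
  have hquot : |h s / √(1 - s ^ 2)| ≤ M * √(1 - s ^ 2) := by
    rw [abs_div, abs_of_pos hW, div_le_iff₀ hW, mul_assoc, Real.mul_self_sqrt hw.le]
    exact hh
  calc |gapRiccati ε h s| ≤ |s / 2| + |ε * (h s / √(1 - s ^ 2))| := abs_add_le _ _
    _ ≤ 1 / 2 + ε * (M * √(1 - s ^ 2)) := by
        rw [abs_mul, abs_of_nonneg hε, abs_div, abs_two]
        gcongr
        exact (abs_lt.2 hs).le
    _ = 1 / 2 + ε * M * √(1 - s ^ 2) := by ring
    _ ≤ 1 := by nlinarith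

lemma gapRiccati_supersolution {α β : ℝ} (hM1 : 1 ≤ M) (hh : |h s| ≤ M * (1 - s ^ 2))
    (hh' : |h' s| ≤ M) (hoff : s ∉ Ioo α β → h' s = 1) (hs : s ∈ Ioo (-1 : ℝ) 1) :
    3 / 4 + 1 / (32 * M ^ 2) ≤ gapRiccatiDeriv (1 / (4 * M ^ 2)) h h' s -
      gapRiccati (1 / (4 * M ^ 2)) h s ^ 2 / (1 - s ^ 2) + gapWeight α β s / (1 - s ^ 2) := by
  have hw := one_sub_sq_pos_of_mem hs
  have hW : 0 < √(1 - s ^ 2) := sqrt_one_sub_sq_pos hs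
  have hW2 : √(1 - s ^ 2) ^ 2 = 1 - s ^ 2 := sq_sqrt_one_sub_sq hs
  have hW1 : √(1 - s ^ 2) ≤ 1 := Real.sqrt_le_one.2 (by linarith [sq_nonneg s])
  rw [gapRiccatiDeriv_sub_sq_div hs]
  set ε := 1 / (4 * M ^ 2) with hε
  set W := √(1 - s ^ 2)
  have hεM : ε * M ^ 2 = 1 / 4 := by rw [hε]; field_simp
  have hε4 : ε ≤ 1 / 4 := one_div_le_one_div_of_le (by norm_num) (by nlinarith)
  have hε0 : 0 < ε := by positivity
  have hδ : 1 / (32 * M ^ 2) = ε / 8 := by rw [hε]; field_simp; norm_num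
  have hquad : ε ^ 2 * (h s / (1 - s ^ 2)) ^ 2 ≤ ε / 4 := by
    have : (h s / (1 - s ^ 2)) ^ 2 ≤ M ^ 2 := by
      rw [← sq_abs, abs_div, abs_of_pos hw]
      gcongr
      exact (div_le_iff₀ hw).2 hh
    nlinarith [mul_le_mul_of_nonneg_left this (sq_nonneg ε)]
  have hone : 1 ≤ 1 / W := (one_le_div hW).2 hW1
  have hinv : 1 / (1 - s ^ 2) = (1 / W) ^ 2 := by rw [← hW2]; field_simp
  rw [hδ, div_eq_mul_one_div (1 / 4 : ℝ), div_eq_mul_one_div (h' s),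
    div_eq_mul_one_div (gapWeight α β s), hinv]
  unfold gapWeight
  split_ifs with hgap
  · have hlin : -(1 / 4 * (1 / W)) ≤ ε * (h' s * (1 / W)) := by
      have hεh : -(1 / 4) ≤ ε * h' s := by nlinarith [(abs_le.1 hh').1]
      nlinarith [mul_le_mul_of_nonneg_right hεh (zero_le_one.trans hone)]
    nlinarith
  · rw [hoff hgap]
    nlinarith

end Bounds

lemma lintegral_add_gapWeight_eq_top {α β : ℝ}
    (hf : ∫⁻ s in Ioo (-1 : ℝ) 1, ENNReal.ofReal (f s ^ 2 / (1 - s ^ 2)) = ⊤) :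
    ∫⁻ s in Ioo (-1 : ℝ) 1, ENNReal.ofReal
      ((1 - s ^ 2) * deriv f s ^ 2 + gapWeight α β s / (1 - s ^ 2) * f s ^ 2) = ⊤ := by
  refine top_unique ?_
  calc ⊤ = ENNReal.ofReal (1 / 4) *
        ∫⁻ s in Ioo (-1 : ℝ) 1, ENNReal.ofReal (f s ^ 2 / (1 - s ^ 2)) := by
        rw [hf, ENNReal.mul_top (by norm_num)]
    _ = ∫⁻ s in Ioo (-1 : ℝ) 1, ENNReal.ofReal (1 / 4 * (f s ^ 2 / (1 - s ^ 2))) := by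
        simp only [← lintegral_const_mul' _ _ ENNReal.ofReal_ne_top,
          ENNReal.ofReal_mul (show (0 : ℝ) ≤ 1 / 4 by norm_num)]
    _ ≤ _ := setLIntegral_mono' measurableSet_Ioo fun s hs ↦ by
        have hw := one_sub_sq_pos_of_mem hs
        rw [← mul_div_assoc, mul_div_right_comm (1 / 4 : ℝ)]
        refine ENNReal.ofReal_le_ofReal (le_add_of_nonneg_of_le (by positivity) ?_)
        gcongr
        exact one_div_four_le_gapWeight α β s

lemma abs_gapRiccati_mul_sq_le {h : ℝ → ℝ} {ε M s η : ℝ} (hε : 0 ≤ ε) (hεM : ε * M ≤ 1 / 4)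
    (hh : |h s| ≤ M * (1 - s ^ 2)) (hs : s ∈ Ioo (-1 : ℝ) 1) (hf : f s ^ 2 ≤ η) :
    |gapRiccati ε h s * f s ^ 2| ≤ η := by
  rw [abs_mul, abs_of_nonneg (sq_nonneg (f s))]
  exact (mul_le_of_le_one_left (sq_nonneg _) (abs_gapRiccati_le_one hε hεM hh hs)).trans hf

/-- A lower bound `c` for the Rayleigh quotient of every locally Lipschitz function on `(-1, 1)`
for the Legendre form with gap weight. -/
def IsLegendreGapBound (α β c : ℝ) : Prop :=
  ∀ f : ℝ → ℝ, LocallyLipschitzOn (Ioo (-1) 1) f →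
    ENNReal.ofReal c * ∫⁻ s in Ioo (-1 : ℝ) 1, ENNReal.ofReal (f s ^ 2) ≤
      ∫⁻ s in Ioo (-1 : ℝ) 1, ENNReal.ofReal ((1 - s ^ 2) * deriv f s ^ 2 +
        gapWeight α β s / (1 - s ^ 2) * f s ^ 2)

theorem exists_isLegendreGapBound {α β : ℝ} (hα : -1 ≤ α) (hαβ : α < β) (hβ : β ≤ 1) :
    ∃ δ : ℝ, 0 < δ ∧ δ ≤ 1 / 32 ∧ IsLegendreGapBound α β (3 / 4 + δ) := by
  obtain ⟨h, h', hcont, hderiv, hl, hr, hoff⟩ := exists_hasDerivAt_eq_one_off_Ioo hα hαβ hβ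
  obtain ⟨M', hM'⟩ := isCompact_Icc.exists_bound_of_continuousOn
    (hcont.continuousOn (s := Icc (-1) 1))
  set M := max M' 1
  have hM : ∀ s ∈ Icc (-1 : ℝ) 1, |h' s| ≤ M := fun s hs ↦ (hM' s hs).trans (le_max_left _ _)
  have hM1 : 1 ≤ M := le_max_right _ _
  have hh : ∀ s ∈ Ioo (-1 : ℝ) 1, |h s| ≤ M * (1 - s ^ 2) := fun s ↦
    abs_le_mul_one_sub_sq hderiv hl hr hM
  refine ⟨1 / (32 * M ^ 2), by positivity, one_div_le_one_div_of_le (by norm_num) (by nlinarith),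
    fun f hf ↦ ?_⟩
  by_cases hfin : ∫⁻ s in Ioo (-1 : ℝ) 1, ENNReal.ofReal (f s ^ 2 / (1 - s ^ 2)) = ⊤
  · exact le_top.trans_eq (lintegral_add_gapWeight_eq_top hfin).symm
  have hεM : 1 / (4 * M ^ 2) * M ≤ 1 / 4 := by
    rw [div_mul_eq_mul_div, one_mul, div_le_div_iff₀ (by positivity) (by norm_num)]
    nlinarith
  have hboundary : ∀ s ∈ Ioo (-1 : ℝ) 1, ∀ η, f s ^ 2 ≤ η →
      |gapRiccati (1 / (4 * M ^ 2)) h s * f s ^ 2| ≤ η := fun s hs η ↦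
    abs_gapRiccati_mul_sq_le (by positivity) hεM (hh s hs) hs
  refine setLIntegral_Ioo_sq_le_of_riccati hf (fun s hs ↦ hasDerivAt_gapRiccati hs (hderiv s))
    (continuousOn_gapRiccatiDeriv (continuous_iff_continuousAt.2 fun x ↦ (hderiv x).continuousAt)
      hcont) (fun s ↦ one_sub_sq_pos_of_mem) (fun s hs ↦ gapRiccati_supersolution hM1 (hh s hs)
      (hM s (Ioo_subset_Icc_self hs)) (hoff s) hs) (by positivity) (fun η hη ↦ ?_) fun η hη ↦ ?_
  · refine ((frequently_nhdsGT_neg_one_sq_le hfin hη).and_eventually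
      (Ioo_mem_nhdsGT (by norm_num : (-1 : ℝ) < 1))).mono fun s hs ↦ ?_
    exact (neg_le_abs _).trans (hboundary s hs.2 η hs.1)
  · refine ((frequently_nhdsLT_one_sq_le hfin hη).and_eventually
      (Ioo_mem_nhdsLT (by norm_num : (-1 : ℝ) < 1))).mono fun s hs ↦ ?_
    exact (le_abs_self _).trans (hboundary s hs.2 η hs.1)

end Legendre

section Poincare

lemma setLIntegral_Ioo_eq_add {F : ℝ → ℝ≥0∞} {l m r : ℝ} (hm : m ∈ Ioo l r) :
    ∫⁻ x in Ioo l r, F x = (∫⁻ x in Ioo l m, F x) + ∫⁻ x in Ioo m r, F x := by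
  rw [setLIntegral_congr (Ioo_ae_eq_Ioc (a := l) (b := m)), ← lintegral_union measurableSet_Ioo
    (Set.disjoint_left.2 fun x hx hx' ↦ hx.2.not_gt hx'.1), Ioc_union_Ioo_eq_Ioo hm.1.le hm.2]

lemma exists_eventually_abs_sub_le_of_locallyLipschitzOn {f : ℝ → ℝ} {U : Set ℝ} {m : ℝ}
    (hf : LocallyLipschitzOn U f) (hU : U ∈ 𝓝 m) :
    ∃ C, ∀ᶠ x in 𝓝 m, |f x - f m| ≤ C * |x - m| := by
  obtain ⟨C, t, ht, hC⟩ := hf (mem_of_mem_nhds hU)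
  rw [nhdsWithin_eq_nhds.2 hU] at ht
  exact ⟨C, by filter_upwards [ht] with x hx using hC.norm_sub_le hx (mem_of_mem_nhds ht)⟩

variable {f p p' w : ℝ → ℝ} {c l m r : ℝ}

lemma eventually_abs_mul_sub_sq_le (hm : m ∈ Ioo l r) (hf : LocallyLipschitzOn (Ioo l r) f)
    (hpm : ∃ A, ∀ᶠ x in 𝓝[≠] m, |p x * (x - m)| ≤ A) {η : ℝ} (hη : 0 < η) :
    ∀ᶠ x in 𝓝[≠] m, |p x * (f x - f m) ^ 2| ≤ η := by
  obtain ⟨A, hA⟩ := hpm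
  obtain ⟨C, hC⟩ := exists_eventually_abs_sub_le_of_locallyLipschitzOn hf (Ioo_mem_nhds hm.1 hm.2)
  have hlim : Tendsto (fun x ↦ A * C ^ 2 * |x - m|) (𝓝 m) (𝓝 0) := by
    have hcont : Continuous fun x ↦ A * C ^ 2 * |x - m| := by fun_prop
    simpa using hcont.tendsto m
  filter_upwards [hA, hC.filter_mono nhdsWithin_le_nhds,
    (hlim.eventually_le_const hη).filter_mono nhdsWithin_le_nhds] with x hAx hCx hηx
  calc |p x * (f x - f m) ^ 2| = |p x| * |f x - f m| ^ 2 := by rw [abs_mul, abs_pow]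
    _ ≤ |p x| * (C * |x - m|) ^ 2 := by gcongr
    _ = |p x * (x - m)| * (C ^ 2 * |x - m|) := by rw [abs_mul]; ring
    _ ≤ A * (C ^ 2 * |x - m|) := by gcongr
    _ ≤ η := by rwa [← mul_assoc]

theorem setLIntegral_Ioo_sub_sq_le_of_riccati (hm : m ∈ Ioo l r)
    (hf : LocallyLipschitzOn (Ioo l r) f) (hp : ∀ x ∈ Ioo l r, x ≠ m → HasDerivAt p (p' x) x)
    (hp' : ContinuousOn p' (Ioo l r \ {m})) (hw : ∀ x ∈ Ioo l r, 0 < w x)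
    (hc : ∀ x ∈ Ioo l r, x ≠ m → c ≤ p' x - p x ^ 2 / w x) (hc0 : 0 ≤ c)
    (hpl : ∀ x ∈ Ioo l m, 0 ≤ p x) (hpr : ∀ x ∈ Ioo m r, p x ≤ 0)
    (hpm : ∃ A, ∀ᶠ x in 𝓝[≠] m, |p x * (x - m)| ≤ A) :
    ENNReal.ofReal c * ∫⁻ x in Ioo l r, ENNReal.ofReal ((f x - f m) ^ 2) ≤
      ∫⁻ x in Ioo l r, ENNReal.ofReal (w x * deriv f x ^ 2) := by
  have hpiece : ∀ l' r', Ioo l' r' ⊆ Ioo l r → m ∉ Ioo l' r' →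
      (∀ η > 0, ∃ᶠ a in 𝓝[>] l', -(p a * (f a - f m) ^ 2) ≤ η) →
      (∀ η > 0, ∃ᶠ b in 𝓝[<] r', p b * (f b - f m) ^ 2 ≤ η) →
      ENNReal.ofReal c * ∫⁻ x in Ioo l' r', ENNReal.ofReal ((f x - f m) ^ 2) ≤
        ∫⁻ x in Ioo l' r', ENNReal.ofReal (w x * deriv f x ^ 2) := fun l' r' hsub hm' hl' hr' ↦ by
    have hne : ∀ x ∈ Ioo l' r', x ≠ m := fun x hx hxm ↦ hm' (hxm ▸ hx)
    simpa using setLIntegral_Ioo_sq_le_of_riccati (f := fun x ↦ f x - f m) (q := 0)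
      ((hf.mono hsub).sub (LipschitzWith.const _).locallyLipschitz.locallyLipschitzOn)
      (fun x hx ↦ hp x (hsub hx) (hne x hx)) (hp'.mono fun x hx ↦ ⟨hsub hx, hne x hx⟩)
      (fun x hx ↦ hw x (hsub hx)) (fun x hx ↦ by simpa using hc x (hsub hx) (hne x hx)) hc0 hl' hr'
  have hnear := fun η (hη : 0 < η) ↦ eventually_abs_mul_sub_sq_le hm hf hpm hη
  rw [setLIntegral_Ioo_eq_add hm, setLIntegral_Ioo_eq_add hm, mul_add]
  refine add_le_add (hpiece l m (Ioo_subset_Ioo_right hm.2.le) (by simp) (fun η hη ↦ ?_)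
    fun η hη ↦ ?_) (hpiece m r (Ioo_subset_Ioo_left hm.1.le) (by simp) (fun η hη ↦ ?_)
    fun η hη ↦ ?_) <;> refine Eventually.frequently ?_
  · filter_upwards [Ioo_mem_nhdsGT hm.1] with x hx
    linarith [mul_nonneg (hpl x hx) (sq_nonneg (f x - f m))]
  · filter_upwards [(hnear η hη).filter_mono (nhdsWithin_mono m fun x ↦ ne_of_lt)] with x hx
    exact (le_abs_self _).trans hx
  · filter_upwards [(hnear η hη).filter_mono (nhdsWithin_mono m fun x ↦ ne_of_gt)] with x hx
    exact (neg_le_abs _).trans hx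
  · filter_upwards [Ioo_mem_nhdsLT hm.2] with x hx
    linarith [mul_nonpos_of_nonpos_of_nonneg (hpr x hx) (sq_nonneg (f x - f m))]

lemma abs_tan_mul_sub_pi_div_two_le {x : ℝ} (hx : |x - Real.pi / 2| ≤ Real.pi / 2) :
    |Real.tan x * (x - Real.pi / 2)| ≤ Real.pi / 2 := by
  have hsin := Real.mul_abs_le_abs_sin hx
  rw [Real.sin_sub_pi_div_two, abs_neg] at hsin
  rw [Real.tan_eq_sin_div_cos, div_mul_eq_mul_div, abs_div, abs_mul]
  refine div_le_of_le_mul₀ (abs_nonneg _) (by positivity) ?_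
  calc |Real.sin x| * |x - Real.pi / 2| ≤ 1 * |x - Real.pi / 2| := by
        gcongr
        exact Real.abs_sin_le_one x
    _ = Real.pi / 2 * (2 / Real.pi * |x - Real.pi / 2|) := by field_simp
    _ ≤ Real.pi / 2 * |Real.cos x| := by gcongr

theorem poincare_Ioo_zero_pi (hf : LocallyLipschitzOn (Ioo 0 Real.pi) f) :
    ∫⁻ x in Ioo 0 Real.pi, ENNReal.ofReal ((f x - f (Real.pi / 2)) ^ 2) ≤
      ∫⁻ x in Ioo 0 Real.pi, ENNReal.ofReal (deriv f x ^ 2) := by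
  have hcos : ∀ x ∈ Ioo 0 Real.pi, x ≠ Real.pi / 2 → Real.cos x ≠ 0 := fun x hx hne hx0 ↦
    hne (Real.injOn_cos (Ioo_subset_Icc_self hx) ⟨by positivity, by linarith [Real.pi_pos]⟩
      (by rw [hx0, Real.cos_pi_div_two]))
  have hmid : Real.pi / 2 ∈ Ioo 0 Real.pi := ⟨by positivity, by linarith [Real.pi_pos]⟩
  have hmain := setLIntegral_Ioo_sub_sq_le_of_riccati (c := 1) (w := 1) (p := Real.tan)
    (p' := fun x ↦ 1 / Real.cos x ^ 2) hmid hf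
    (fun x hx hne ↦ Real.hasDerivAt_tan (hcos x hx hne))
    (ContinuousOn.div (by fun_prop) (by fun_prop) fun x hx ↦ pow_ne_zero 2 (hcos x hx.1 hx.2))
    (fun _ _ ↦ one_pos) (fun x hx hne ↦ ?_) zero_le_one (fun x hx ↦ ?_) (fun x hx ↦ ?_)
    ⟨Real.pi / 2, ?_⟩
  · simpa using hmain
  · have := hcos x hx hne
    rw [Real.tan_eq_sin_div_cos, Pi.one_apply, div_one]
    apply le_of_eq
    field_simp
    linear_combination Real.sin_sq_add_cos_sq x
  · exact Real.tan_nonneg_of_nonneg_of_le_pi_div_two hx.1.le hx.2.le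
  · rw [Real.tan_eq_sin_div_cos]
    exact div_nonpos_of_nonneg_of_nonpos
      (Real.sin_nonneg_of_nonneg_of_le_pi (by linarith [hx.1, Real.pi_pos]) hx.2.le)
      (Real.cos_nonpos_of_pi_div_two_le_of_le hx.1.le (by linarith [hx.2, Real.pi_pos]))
  · filter_upwards [nhdsWithin_le_nhds (Ioo_mem_nhds hmid.1 hmid.2)] with x hx
    exact abs_tan_mul_sub_pi_div_two_le (abs_le.2 ⟨by linarith [hx.1], by linarith [hx.2]⟩)

theorem poincare_legendre (hf : LocallyLipschitzOn (Ioo (-1) 1) f) :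
    2 * ∫⁻ s in Ioo (-1 : ℝ) 1, ENNReal.ofReal ((f s - f 0) ^ 2) ≤
      ∫⁻ s in Ioo (-1 : ℝ) 1, ENNReal.ofReal ((1 - s ^ 2) * deriv f s ^ 2) := by
  have hmain := setLIntegral_Ioo_sub_sq_le_of_riccati (c := 2) (w := fun s ↦ 1 - s ^ 2)
    (p := fun s ↦ s - s⁻¹) (p' := fun s ↦ 1 + (s ^ 2)⁻¹) (m := 0) (by norm_num) hf
    (fun s _ hs ↦ ((hasDerivAt_id s).sub (hasDerivAt_inv hs)).congr_deriv (sub_neg_eq_add _ _))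
    (ContinuousOn.add (by fun_prop) (ContinuousOn.inv₀ (by fun_prop)
      fun s hs ↦ pow_ne_zero 2 hs.2)) (fun s ↦ one_sub_sq_pos_of_mem) (fun s hs hs0 ↦ ?_)
    zero_le_two (fun s hs ↦ ?_) (fun s hs ↦ ?_) ⟨1, ?_⟩
  · simpa using hmain
  · have := (one_sub_sq_pos_of_mem hs).ne'
    apply le_of_eq
    field_simp
    ring
  · have : 1 ≤ (-s)⁻¹ := (one_le_inv₀ (by linarith [hs.2])).2 (by linarith [hs.1])
    rw [inv_neg] at this
    linarith [hs.1]
  · have : 1 ≤ s⁻¹ := (one_le_inv₀ hs.1).2 hs.2.le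
    linarith [hs.2]
  · filter_upwards [self_mem_nhdsWithin, nhdsWithin_le_nhds
      (Ioo_mem_nhds (by norm_num : (-1 : ℝ) < 0) one_pos)] with s hs0 hs
    have hprod : (s - s⁻¹) * (s - 0) = -(1 - s ^ 2) := by
      have : s ≠ 0 := hs0
      field_simp
      ring
    rw [hprod, abs_neg, abs_of_pos (one_sub_sq_pos_of_mem hs)]
    linarith [sq_nonneg s]

end Poincare

/-! ### Variance on product spaces -/

section Variance

variable {X Y : Type*} [MeasurableSpace X] [MeasurableSpace Y] {μ : Measure X} {ν : Measure Y}

lemma memLp_two_of_lintegral_ofReal_sq_ne_top {f : X → ℝ} (hf : AEStronglyMeasurable f μ)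
    (hfin : ∫⁻ x, ENNReal.ofReal (f x ^ 2) ∂μ ≠ ⊤) : MemLp f 2 μ :=
  (memLp_two_iff_integrable_sq hf).2 ⟨hf.pow 2, (hasFiniteIntegral_iff_ofReal
    (Eventually.of_forall fun x ↦ sq_nonneg (f x))).2 hfin.lt_top⟩

lemma integral_quadratic [IsFiniteMeasure μ] {f : X → ℝ} (hf : MemLp f 2 μ) (a b c : ℝ) :
    Integrable (fun x ↦ a * f x ^ 2 + b * f x + c) μ ∧
      ∫ x, (a * f x ^ 2 + b * f x + c) ∂μ =
        a * ∫ x, f x ^ 2 ∂μ + b * ∫ x, f x ∂μ + c * μ.real univ := by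
  have hsq : Integrable (fun x ↦ a * f x ^ 2) μ := hf.integrable_sq.const_mul a
  have hlin : Integrable (fun x ↦ b * f x) μ := (hf.integrable one_le_two).const_mul b
  have hsum : Integrable (fun x ↦ a * f x ^ 2 + b * f x) μ := hsq.add hlin
  refine ⟨hsum.add (integrable_const c), ?_⟩
  rw [integral_add hsum (integrable_const c), integral_add hsq hlin,
    integral_const_mul, integral_const_mul, integral_const, smul_eq_mul, mul_comm c]

lemma lintegral_lintegral_sub_sq [IsFiniteMeasure μ] {f : X → ℝ} (hf : MemLp f 2 μ) :
    ∫⁻ x, ∫⁻ y, ENNReal.ofReal ((f x - f y) ^ 2) ∂μ ∂μ =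
      ENNReal.ofReal (2 * (μ.real univ * ∫ x, f x ^ 2 ∂μ - (∫ x, f x ∂μ) ^ 2)) := by
  have hexpand (x y : X) : (f x - f y) ^ 2 = 1 * f y ^ 2 + -2 * f x * f y + f x ^ 2 := by ring
  have hinner (x : X) : ∫ y, (f x - f y) ^ 2 ∂μ = μ.real univ * f x ^ 2 +
      -2 * (∫ y, f y ∂μ) * f x + ∫ y, f y ^ 2 ∂μ := by
    simp only [hexpand, (integral_quadratic hf _ _ _).2]
    ring
  have houter := integral_quadratic hf (μ.real univ) (-2 * ∫ y, f y ∂μ) (∫ y, f y ^ 2 ∂μ)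
  calc ∫⁻ x, ∫⁻ y, ENNReal.ofReal ((f x - f y) ^ 2) ∂μ ∂μ
      = ∫⁻ x, ENNReal.ofReal (∫ y, (f x - f y) ^ 2 ∂μ) ∂μ := lintegral_congr fun x ↦
        (ofReal_integral_eq_lintegral_ofReal
          (by simpa only [hexpand] using (integral_quadratic hf _ _ _).1)
          (Eventually.of_forall fun y ↦ sq_nonneg _)).symm
    _ = ENNReal.ofReal (∫ x, ∫ y, (f x - f y) ^ 2 ∂μ ∂μ) :=
        (ofReal_integral_eq_lintegral_ofReal (by simpa only [hinner] using houter.1)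
          (Eventually.of_forall fun x ↦ integral_nonneg fun y ↦ sq_nonneg _)).symm
    _ = _ := by
        simp only [hinner, houter.2]
        ring_nf

lemma ofReal_two_mul_measureReal_mul_integral_sq [IsFiniteMeasure μ] {f : X → ℝ}
    (hf : MemLp f 2 μ) :
    ENNReal.ofReal (2 * (μ.real univ * ∫ x, f x ^ 2 ∂μ)) =
      2 * μ univ * ∫⁻ x, ENNReal.ofReal (f x ^ 2) ∂μ := by
  rw [← ofReal_integral_eq_lintegral_ofReal hf.integrable_sq
    (Eventually.of_forall fun x ↦ sq_nonneg (f x)), ENNReal.ofReal_mul zero_le_two,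
    ENNReal.ofReal_mul measureReal_nonneg, ofReal_measureReal, ENNReal.ofReal_ofNat, mul_assoc]

lemma lintegral_lintegral_sub_sq_of_integral_eq_zero [IsFiniteMeasure μ] {f : X → ℝ}
    (hf : MemLp f 2 μ) (hmean : ∫ x, f x ∂μ = 0) :
    ∫⁻ x, ∫⁻ y, ENNReal.ofReal ((f x - f y) ^ 2) ∂μ ∂μ =
      2 * μ univ * ∫⁻ x, ENNReal.ofReal (f x ^ 2) ∂μ := by
  rw [lintegral_lintegral_sub_sq hf, hmean, ← ofReal_two_mul_measureReal_mul_integral_sq hf]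
  simp

lemma lintegral_lintegral_sub_sq_le [IsFiniteMeasure μ] [NeZero μ] {f : X → ℝ}
    (hf : AEStronglyMeasurable f μ) (c : ℝ) :
    ∫⁻ x, ∫⁻ y, ENNReal.ofReal ((f x - f y) ^ 2) ∂μ ∂μ ≤
      2 * μ univ * ∫⁻ x, ENNReal.ofReal ((f x - c) ^ 2) ∂μ := by
  by_cases hfin : ∫⁻ x, ENNReal.ofReal ((f x - c) ^ 2) ∂μ = ⊤
  · rw [hfin, ENNReal.mul_top (mul_ne_zero two_ne_zero (NeZero.ne _))]
    exact le_top
  have hL : MemLp (fun x ↦ f x - c) 2 μ :=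
    memLp_two_of_lintegral_ofReal_sq_ne_top (hf.sub aestronglyMeasurable_const) hfin
  rw [← ofReal_two_mul_measureReal_mul_integral_sq hL]
  have hshift := lintegral_lintegral_sub_sq hL
  simp only [sub_sub_sub_cancel_right] at hshift
  rw [hshift]
  refine ENNReal.ofReal_le_ofReal ?_
  linarith [sq_nonneg (∫ x, (f x - c) ∂μ)]

variable [SFinite μ] [SFinite ν]

lemma measurable_ofReal_sub_sq {Z : Type*} [MeasurableSpace Z] {f g : Z → ℝ} (hf : Measurable f)
    (hg : Measurable g) : Measurable fun z ↦ ENNReal.ofReal ((f z - g z) ^ 2) :=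
  ((hf.sub hg).pow_const 2).ennreal_ofReal

-- The defect of the four-point inequality is `(a - b - c + d)²`.
lemma ofReal_sub_sq_add_le (a b c d : ℝ) :
    ENNReal.ofReal ((a - d) ^ 2) + ENNReal.ofReal ((b - c) ^ 2) ≤
      ENNReal.ofReal ((a - b) ^ 2) + ENNReal.ofReal ((c - d) ^ 2) +
        (ENNReal.ofReal ((a - c) ^ 2) + ENNReal.ofReal ((b - d) ^ 2)) := by
  repeat rw [← ENNReal.ofReal_add (by positivity) (by positivity)]
  exact ENNReal.ofReal_le_ofReal (by linarith [sq_nonneg (a - b - c + d)])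

lemma two_mul_lintegral_lintegral_sub_sq_le {f g : Y → ℝ} (hf : Measurable f) (hg : Measurable g) :
    2 * ∫⁻ s, ∫⁻ t, ENNReal.ofReal ((f s - g t) ^ 2) ∂ν ∂ν ≤
      (∫⁻ s, ∫⁻ t, ENNReal.ofReal ((f s - f t) ^ 2) ∂ν ∂ν) +
      (∫⁻ s, ∫⁻ t, ENNReal.ofReal ((g s - g t) ^ 2) ∂ν ∂ν) +
      2 * (ν univ * ∫⁻ s, ENNReal.ofReal ((f s - g s) ^ 2) ∂ν) := by
  have hmeas {F G : Y → ℝ} {i j : Y × Y → Y} (hF : Measurable F) (hG : Measurable G)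
      (hi : Measurable i) (hj : Measurable j) :
      Measurable fun z : Y × Y ↦ ENNReal.ofReal ((F (i z) - G (j z)) ^ 2) :=
    measurable_ofReal_sub_sq (hF.comp hi) (hG.comp hj)
  have hiter {F G : Y → ℝ} (hF : Measurable F) (hG : Measurable G) :
      ∫⁻ s, ∫⁻ t, ENNReal.ofReal ((F s - G t) ^ 2) ∂ν ∂ν =
        ∫⁻ z, ENNReal.ofReal ((F z.1 - G z.2) ^ 2) ∂ν.prod ν :=
    (lintegral_prod _ (hmeas hF hG measurable_fst measurable_snd).aemeasurable).symm
  have hswap : ∫⁻ z, ENNReal.ofReal ((f z.1 - g z.2) ^ 2) ∂ν.prod ν =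
      ∫⁻ z, ENNReal.ofReal ((f z.2 - g z.1) ^ 2) ∂ν.prod ν :=
    (lintegral_prod_swap fun z : Y × Y ↦ ENNReal.ofReal ((f z.1 - g z.2) ^ 2)).symm
  have hfst : ∫⁻ z, ENNReal.ofReal ((f z.1 - g z.1) ^ 2) ∂ν.prod ν =
      ν univ * ∫⁻ s, ENNReal.ofReal ((f s - g s) ^ 2) ∂ν := by
    rw [lintegral_prod _ (hmeas hf hg measurable_fst measurable_fst).aemeasurable]
    simp [lintegral_mul_const _ (measurable_ofReal_sub_sq hf hg), mul_comm]
  have hsnd : ∫⁻ z, ENNReal.ofReal ((f z.2 - g z.2) ^ 2) ∂ν.prod ν =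
      ν univ * ∫⁻ s, ENNReal.ofReal ((f s - g s) ^ 2) ∂ν := by
    rw [← hfst]
    exact lintegral_prod_swap fun z : Y × Y ↦ ENNReal.ofReal ((f z.1 - g z.1) ^ 2)
  rw [hiter hf hg, hiter hf hf, hiter hg hg, two_mul, two_mul]
  nth_rw 2 [hswap]
  nth_rw 1 [← hfst]
  rw [← hsnd, ← lintegral_add_left (hmeas hf hg measurable_fst measurable_snd),
    ← lintegral_add_left (hmeas hf hf measurable_fst measurable_snd),
    ← lintegral_add_left (hmeas hf hg measurable_fst measurable_fst),
    ← lintegral_add_left ((hmeas hf hf measurable_fst measurable_snd).fun_add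
      (hmeas hg hg measurable_fst measurable_snd))]
  exact lintegral_mono fun z ↦ ofReal_sub_sq_add_le _ _ _ _

lemma lintegral_prod_prod_comm {F : X → Y → X → Y → ℝ≥0∞}
    (hF : Measurable fun z : (X × Y) × X × Y ↦ F z.1.1 z.1.2 z.2.1 z.2.2) :
    ∫⁻ z, ∫⁻ z', F z.1 z.2 z'.1 z'.2 ∂μ.prod ν ∂μ.prod ν =
      ∫⁻ x, ∫⁻ y, ∫⁻ s, ∫⁻ t, F x s y t ∂ν ∂ν ∂μ ∂μ := by
  rw [lintegral_prod _ hF.lintegral_prod_right'.aemeasurable]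
  refine lintegral_congr fun x ↦ ?_
  have hx : Measurable fun z : (Y × X) × Y ↦ F x z.1.1 z.1.2 z.2 :=
    hF.comp (by fun_prop : Measurable fun z : (Y × X) × Y ↦ ((x, z.1.1), z.1.2, z.2))
  calc ∫⁻ s, ∫⁻ z', F x s z'.1 z'.2 ∂μ.prod ν ∂ν = ∫⁻ s, ∫⁻ y, ∫⁻ t, F x s y t ∂ν ∂μ ∂ν :=
        lintegral_congr fun s ↦ lintegral_prod _
          (hx.comp (by fun_prop : Measurable fun z' : X × Y ↦ ((s, z'.1), z'.2))).aemeasurable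
    _ = ∫⁻ y, ∫⁻ s, ∫⁻ t, F x s y t ∂ν ∂ν ∂μ :=
        lintegral_lintegral_swap hx.lintegral_prod_right'.aemeasurable

lemma lintegral_lintegral_add_add_mul {D : X → ℝ≥0∞} {R : X → X → ℝ≥0∞} (hD : Measurable D)
    (hR : Measurable (Function.uncurry R)) (c : ℝ≥0∞) :
    ∫⁻ x, ∫⁻ y, (D x + D y + c * R x y) ∂μ ∂μ =
      2 * (μ univ * ∫⁻ x, D x ∂μ) + c * ∫⁻ x, ∫⁻ y, R x y ∂μ ∂μ := by
  have hinner (x : X) : ∫⁻ y, (D x + D y + c * R x y) ∂μ =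
      D x * μ univ + ∫⁻ y, D y ∂μ + c * ∫⁻ y, R x y ∂μ := by
    rw [lintegral_add_left (hD.const_add (D x)), lintegral_add_left measurable_const,
      lintegral_const, lintegral_const_mul c hR.of_uncurry_left]
  have hRint : Measurable fun x ↦ ∫⁻ y, R x y ∂μ := hR.lintegral_prod_right'
  rw [lintegral_congr hinner,
    lintegral_add_left ((hD.mul_const (μ univ)).add_const (∫⁻ y, D y ∂μ)),
    lintegral_add_left (hD.mul_const (μ univ)), lintegral_mul_const _ hD, lintegral_const,
    lintegral_const_mul c hRint, mul_comm (∫⁻ x, D x ∂μ), two_mul]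

variable {u : X → Y → ℝ}

lemma lintegral_sub_sq_le_add (hu : Measurable (Function.uncurry u)) :
    ∫⁻ x, ∫⁻ y, ∫⁻ s, ∫⁻ t, ENNReal.ofReal ((u x s - u y t) ^ 2) ∂ν ∂ν ∂μ ∂μ ≤
      μ univ * (∫⁻ x, ∫⁻ s, ∫⁻ t, ENNReal.ofReal ((u x s - u x t) ^ 2) ∂ν ∂ν ∂μ) +
      ν univ * (∫⁻ x, ∫⁻ y, ∫⁻ s, ENNReal.ofReal ((u x s - u y s) ^ 2) ∂ν ∂μ ∂μ) := by
  have hD : Measurable fun x ↦ ∫⁻ s, ∫⁻ t, ENNReal.ofReal ((u x s - u x t) ^ 2) ∂ν ∂ν :=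
    have hz : Measurable fun z : (X × Y) × Y ↦
        ENNReal.ofReal ((u z.1.1 z.1.2 - u z.1.1 z.2) ^ 2) :=
      measurable_ofReal_sub_sq (hu.comp measurable_fst)
        (hu.comp (measurable_fst.fst.prodMk measurable_snd))
    hz.lintegral_prod_right'.lintegral_prod_right'
  have hR : Measurable fun p : X × X ↦ ∫⁻ s, ENNReal.ofReal ((u p.1 s - u p.2 s) ^ 2) ∂ν :=
    Measurable.lintegral_prod_right' (f := fun z : (X × X) × Y ↦
        ENNReal.ofReal ((u z.1.1 z.2 - u z.1.2 z.2) ^ 2)) <|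
      measurable_ofReal_sub_sq (hu.comp (measurable_fst.fst.prodMk measurable_snd))
        (hu.comp (measurable_fst.snd.prodMk measurable_snd))
  refine (ENNReal.mul_le_mul_iff_right two_ne_zero ENNReal.ofNat_ne_top).1 ?_
  rw [mul_add, ← mul_assoc 2 (ν univ), ← lintegral_lintegral_add_add_mul hD
    (R := fun x y ↦ ∫⁻ s, ENNReal.ofReal ((u x s - u y s) ^ 2) ∂ν) hR]
  rw [← lintegral_const_mul' 2 _ ENNReal.ofNat_ne_top]
  refine lintegral_mono fun x ↦ ?_
  rw [← lintegral_const_mul' 2 _ ENNReal.ofNat_ne_top]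
  refine lintegral_mono fun y ↦ ?_
  rw [mul_assoc]
  exact two_mul_lintegral_lintegral_sub_sq_le hu.of_uncurry_left hu.of_uncurry_left

theorem efron_stein [IsFiniteMeasure μ] [IsFiniteMeasure ν]
    (hu : Measurable (Function.uncurry u)) (hL : MemLp (Function.uncurry u) 2 (μ.prod ν))
    (hmean : ∫ z, Function.uncurry u z ∂μ.prod ν = 0) :
    2 * (μ univ * ν univ) * ∫⁻ x, ∫⁻ s, ENNReal.ofReal (u x s ^ 2) ∂ν ∂μ ≤
      μ univ * (∫⁻ x, ∫⁻ s, ∫⁻ t, ENNReal.ofReal ((u x s - u x t) ^ 2) ∂ν ∂ν ∂μ) +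
      ν univ * (∫⁻ s, ∫⁻ x, ∫⁻ y, ENNReal.ofReal ((u x s - u y s) ^ 2) ∂μ ∂μ ∂ν) := by
  have hz : Measurable fun z : (X × X) × Y ↦ ENNReal.ofReal ((u z.1.1 z.2 - u z.1.2 z.2) ^ 2) :=
    measurable_ofReal_sub_sq (hu.comp (measurable_fst.fst.prodMk measurable_snd))
      (hu.comp (measurable_fst.snd.prodMk measurable_snd))
  have hrotate : ∫⁻ s, ∫⁻ x, ∫⁻ y, ENNReal.ofReal ((u x s - u y s) ^ 2) ∂μ ∂μ ∂ν =
      ∫⁻ x, ∫⁻ y, ∫⁻ s, ENNReal.ofReal ((u x s - u y s) ^ 2) ∂ν ∂μ ∂μ := by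
    have hx (x : X) : Measurable fun z : Y × X ↦ ENNReal.ofReal ((u x z.1 - u z.2 z.1) ^ 2) :=
      hz.comp (by fun_prop : Measurable fun z : Y × X ↦ ((x, z.2), z.1))
    have hxs : Measurable fun z : Y × X ↦
        ∫⁻ y, ENNReal.ofReal ((u z.2 z.1 - u y z.1) ^ 2) ∂μ :=
      Measurable.lintegral_prod_right' (f := fun z : (Y × X) × X ↦
          ENNReal.ofReal ((u z.1.2 z.1.1 - u z.2 z.1.1) ^ 2)) <|
        hz.comp (by fun_prop : Measurable fun z : (Y × X) × X ↦ ((z.1.2, z.2), z.1.1))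
    rw [lintegral_lintegral_swap hxs.aemeasurable]
    exact lintegral_congr fun x ↦ lintegral_lintegral_swap (hx x).aemeasurable
  have hpairs := lintegral_lintegral_sub_sq_of_integral_eq_zero hL hmean
  rw [lintegral_prod _ (hu.pow_const 2).ennreal_ofReal.aemeasurable, ← univ_prod_univ,
    Measure.prod_prod] at hpairs
  rw [hrotate]
  refine hpairs.symm.trans_le (Eq.trans_le ?_ (lintegral_sub_sq_le_add hu))
  exact lintegral_prod_prod_comm (F := fun x s y t ↦ ENNReal.ofReal ((u x s - u y t) ^ 2))
    (measurable_ofReal_sub_sq (hu.comp measurable_fst) (hu.comp measurable_snd))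

end Variance

/-! ### The gap estimate on the cylinder -/

section Cylinder

lemma locallyLipschitzOn_comp {X Y Z : Type*} [PseudoEMetricSpace X] [PseudoEMetricSpace Y]
    [PseudoEMetricSpace Z] {f : Y → Z} {φ : X → Y} {S : Set X} {T : Set Y}
    (hf : LocallyLipschitzOn T f) (hφ : LocallyLipschitzOn S φ) (hmaps : MapsTo φ S T) :
    LocallyLipschitzOn S (fun x ↦ f (φ x)) := by
  intro x hx
  obtain ⟨Cf, t, ht, hft⟩ := hf (hmaps hx)
  obtain ⟨Cφ, s, hs, hφs⟩ := hφ hx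
  have htendsto : Tendsto φ (𝓝[S] x) (𝓝[T] (φ x)) :=
    (hφ.continuousOn x hx).tendsto_nhdsWithin hmaps
  exact ⟨Cf * Cφ, s ∩ φ ⁻¹' t, inter_mem hs (htendsto ht),
    hft.comp (hφs.mono inter_subset_left) fun y hy ↦ hy.2⟩

lemma lintegral_prod_mono_of_ae_fst {X Y : Type*} [MeasurableSpace X] [MeasurableSpace Y]
    {μ : Measure X} {ν : Measure Y} [SFinite ν] {F G : X × Y → ℝ≥0∞} (hF : Measurable F)
    (hG : Measurable G)
    (h : ∀ᵐ x ∂μ, ∫⁻ y, F (x, y) ∂ν ≤ ∫⁻ y, G (x, y) ∂ν) :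
    ∫⁻ p, F p ∂μ.prod ν ≤ ∫⁻ p, G p ∂μ.prod ν := by
  rw [lintegral_prod _ hF.aemeasurable, lintegral_prod _ hG.aemeasurable]
  exact lintegral_mono_ae h

lemma lintegral_prod_mono_of_ae_snd {X Y : Type*} [MeasurableSpace X] [MeasurableSpace Y]
    {μ : Measure X} {ν : Measure Y} [SFinite μ] [SFinite ν] {F G : X × Y → ℝ≥0∞}
    (hF : Measurable F) (hG : Measurable G)
    (h : ∀ᵐ y ∂ν, ∫⁻ x, F (x, y) ∂μ ≤ ∫⁻ x, G (x, y) ∂μ) :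
    ∫⁻ p, F p ∂μ.prod ν ≤ ∫⁻ p, G p ∂μ.prod ν := by
  rw [lintegral_prod_symm _ hF.aemeasurable, lintegral_prod_symm _ hG.aemeasurable]
  exact lintegral_mono_ae h

/-- The area measure of the sphere in the cylindrical coordinates `(θ, s)` (longitude and height),
for longitudes in `I`; by Archimedes' theorem it is the Lebesgue measure on `I × (-1, 1)`. -/
def cylinderMeasure (I : Set ℝ) : Measure (ℝ × ℝ) :=
  (volume.restrict I).prod (volume.restrict (Ioo (-1 : ℝ) 1))

/-- The Dirichlet energy of a function on the sphere in cylindrical coordinates, in terms of its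
partial derivatives `A = ∂u/∂θ` and `B = ∂u/∂s`. -/
def cylinderEnergy (I : Set ℝ) (A B : ℝ → ℝ → ℝ) : ℝ≥0∞ :=
  ∫⁻ p, ENNReal.ofReal ((1 - p.2 ^ 2) * B p.1 p.2 ^ 2 + A p.1 p.2 ^ 2 / (1 - p.2 ^ 2))
    ∂cylinderMeasure I

/-- The function `u` of `(θ, s) ∈ I × (-1, 1)` is locally Lipschitz in each variable, with
measurable functions `A`, `B` representing the partial derivatives `∂u/∂θ`, `∂u/∂s` almost
everywhere. -/
structure HasCylinderPartials (I : Set ℝ) (u A B : ℝ → ℝ → ℝ) : Prop where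
  measurable : Measurable (Function.uncurry u)
  measurable_fst : Measurable (Function.uncurry A)
  measurable_snd : Measurable (Function.uncurry B)
  locallyLipschitzOn_fst : ∀ s ∈ Ioo (-1 : ℝ) 1, LocallyLipschitzOn I fun θ ↦ u θ s
  locallyLipschitzOn_snd : ∀ θ ∈ I, LocallyLipschitzOn (Ioo (-1) 1) (u θ)
  hasDerivAt_fst : ∀ᵐ p ∂cylinderMeasure I, HasDerivAt (fun θ ↦ u θ p.2) (A p.1 p.2) p.1
  hasDerivAt_snd : ∀ᵐ p ∂cylinderMeasure I, HasDerivAt (u p.1) (B p.1 p.2) p.2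

namespace HasCylinderPartials

variable {I J : Set ℝ} {u v A A' B B' : ℝ → ℝ → ℝ}

lemma ae_deriv_fst_eq (h : HasCylinderPartials I u A B) :
    ∀ᵐ s ∂volume.restrict (Ioo (-1 : ℝ) 1), ∀ᵐ θ ∂volume.restrict I,
      deriv (fun θ ↦ u θ s) θ = A θ s := by
  have hswap := Measure.measurePreserving_swap.quasiMeasurePreserving.ae h.hasDerivAt_fst
  filter_upwards [Measure.ae_ae_of_ae_prod hswap] with s hs
  filter_upwards [hs] with θ hθ using hθ.deriv

lemma ae_deriv_snd_eq (h : HasCylinderPartials I u A B) :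
    ∀ᵐ θ ∂volume.restrict I, ∀ᵐ s ∂volume.restrict (Ioo (-1 : ℝ) 1), deriv (u θ) s = B θ s := by
  filter_upwards [Measure.ae_ae_of_ae_prod h.hasDerivAt_snd] with θ hθ
  filter_upwards [hθ] with s hs using hs.deriv

lemma mono (h : HasCylinderPartials I u A B) (hJ : J ⊆ I) : HasCylinderPartials J u A B where
  measurable := h.measurable
  measurable_fst := h.measurable_fst
  measurable_snd := h.measurable_snd
  locallyLipschitzOn_fst s hs := (h.locallyLipschitzOn_fst s hs).mono hJ
  locallyLipschitzOn_snd θ hθ := h.locallyLipschitzOn_snd θ (hJ hθ)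
  hasDerivAt_fst := ae_mono (Measure.prod_mono (Measure.restrict_mono_set _ hJ) le_rfl)
    h.hasDerivAt_fst
  hasDerivAt_snd := ae_mono (Measure.prod_mono (Measure.restrict_mono_set _ hJ) le_rfl)
    h.hasDerivAt_snd

lemma add (hu : HasCylinderPartials I u A B) (hv : HasCylinderPartials I v A' B') :
    HasCylinderPartials I (fun θ s ↦ u θ s + v θ s) (fun θ s ↦ A θ s + A' θ s)
      (fun θ s ↦ B θ s + B' θ s) where
  measurable := hu.measurable.add hv.measurable
  measurable_fst := hu.measurable_fst.add hv.measurable_fst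
  measurable_snd := hu.measurable_snd.add hv.measurable_snd
  locallyLipschitzOn_fst s hs :=
    (hu.locallyLipschitzOn_fst s hs).add (hv.locallyLipschitzOn_fst s hs)
  locallyLipschitzOn_snd θ hθ :=
    (hu.locallyLipschitzOn_snd θ hθ).add (hv.locallyLipschitzOn_snd θ hθ)
  hasDerivAt_fst := by
    filter_upwards [hu.hasDerivAt_fst, hv.hasDerivAt_fst] with p hup hvp using hup.fun_add hvp
  hasDerivAt_snd := by
    filter_upwards [hu.hasDerivAt_snd, hv.hasDerivAt_snd] with p hup hvp using hup.fun_add hvp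

lemma sub (hu : HasCylinderPartials I u A B) (hv : HasCylinderPartials I v A' B') :
    HasCylinderPartials I (fun θ s ↦ u θ s - v θ s) (fun θ s ↦ A θ s - A' θ s)
      (fun θ s ↦ B θ s - B' θ s) where
  measurable := hu.measurable.sub hv.measurable
  measurable_fst := hu.measurable_fst.sub hv.measurable_fst
  measurable_snd := hu.measurable_snd.sub hv.measurable_snd
  locallyLipschitzOn_fst s hs :=
    (hu.locallyLipschitzOn_fst s hs).sub (hv.locallyLipschitzOn_fst s hs)
  locallyLipschitzOn_snd θ hθ :=
    (hu.locallyLipschitzOn_snd θ hθ).sub (hv.locallyLipschitzOn_snd θ hθ)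
  hasDerivAt_fst := by
    filter_upwards [hu.hasDerivAt_fst, hv.hasDerivAt_fst] with p hup hvp using hup.fun_sub hvp
  hasDerivAt_snd := by
    filter_upwards [hu.hasDerivAt_snd, hv.hasDerivAt_snd] with p hup hvp using hup.fun_sub hvp

end HasCylinderPartials

lemma measurePreserving_neg_Ioo (a b : ℝ) :
    MeasurePreserving (fun x : ℝ ↦ -x) (volume.restrict (Ioo a b))
      (volume.restrict (Ioo (-b) (-a))) := by
  have h := (Measure.measurePreserving_neg (volume : Measure ℝ)).restrict_preimage
    (measurableSet_Ioo (a := -b) (b := -a))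
  rwa [neg_preimage, neg_Ioo, neg_neg, neg_neg] at h

lemma measurePreserving_cylinder_reflect (a b : ℝ) :
    MeasurePreserving (fun p : ℝ × ℝ ↦ (-p.1, p.2)) (cylinderMeasure (Ioo a b))
      (cylinderMeasure (Ioo (-b) (-a))) :=
  (measurePreserving_neg_Ioo a b).prod (MeasurePreserving.id _)

lemma HasCylinderPartials.reflect {L : ℝ} {u A B : ℝ → ℝ → ℝ}
    (h : HasCylinderPartials (Ioo (-L) L) u A B) :
    HasCylinderPartials (Ioo (-L) L) (fun θ s ↦ u (-θ) s) (fun θ s ↦ -A (-θ) s)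
      (fun θ s ↦ B (-θ) s) := by
  have hmeas : Measurable fun p : ℝ × ℝ ↦ (-p.1, p.2) := by fun_prop
  have hmaps : MapsTo (fun θ : ℝ ↦ -θ) (Ioo (-L) L) (Ioo (-L) L) := fun θ hθ ↦
    ⟨neg_lt_neg hθ.2, neg_lt.1 hθ.1⟩
  have hpres := measurePreserving_cylinder_reflect (-L) L
  rw [neg_neg] at hpres
  exact {
    measurable := h.measurable.comp hmeas
    measurable_fst := (h.measurable_fst.comp hmeas).neg
    measurable_snd := h.measurable_snd.comp hmeas
    locallyLipschitzOn_fst := fun s hs ↦ locallyLipschitzOn_comp (h.locallyLipschitzOn_fst s hs)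
      LipschitzWith.id.neg.locallyLipschitz.locallyLipschitzOn hmaps
    locallyLipschitzOn_snd := fun θ hθ ↦ h.locallyLipschitzOn_snd (-θ) (hmaps hθ)
    hasDerivAt_fst := by
      filter_upwards [hpres.quasiMeasurePreserving.ae h.hasDerivAt_fst] with p hp
      simpa [Function.comp_def] using hp.comp p.1 (hasDerivAt_neg p.1)
    hasDerivAt_snd := hpres.quasiMeasurePreserving.ae h.hasDerivAt_snd }

lemma cylinderMeasure_Ioo_neg {L : ℝ} (hL : 0 < L) :
    cylinderMeasure (Ioo (-L) L) = cylinderMeasure (Ioo 0 L) +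
      (cylinderMeasure (Ioo 0 L)).map fun p ↦ (-p.1, p.2) := by
  have hsplit : (volume.restrict (Ioo (-L) L) : Measure ℝ) =
      volume.restrict (Ioo (-L) 0) + volume.restrict (Ioo 0 L) := by
    rw [restrict_Ioo_eq_restrict_Ioc, ← Ioc_union_Ioc_eq_Ioc (neg_nonpos.2 hL.le) hL.le,
      Measure.restrict_union (Ioc_disjoint_Ioc_of_le le_rfl) measurableSet_Ioc,
      restrict_Ioo_eq_restrict_Ioc, restrict_Ioo_eq_restrict_Ioc]
  have hmap := (measurePreserving_cylinder_reflect 0 L).map_eq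
  rw [neg_zero] at hmap
  rw [hmap, cylinderMeasure, hsplit, Measure.add_prod, add_comm]
  rfl

lemma lintegral_cylinderMeasure_Ioo_neg {L : ℝ} (hL : 0 < L) {F : ℝ × ℝ → ℝ≥0∞}
    (hF : Measurable F) :
    ∫⁻ p, F p ∂cylinderMeasure (Ioo (-L) L) =
      ∫⁻ p, (F p + F (-p.1, p.2)) ∂cylinderMeasure (Ioo 0 L) := by
  rw [cylinderMeasure_Ioo_neg hL, lintegral_add_measure, lintegral_map hF (by fun_prop),
    lintegral_add_left hF]

lemma integral_cylinderMeasure_Ioo_neg {L : ℝ} (hL : 0 < L) {f : ℝ × ℝ → ℝ}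
    (hf : Integrable f (cylinderMeasure (Ioo (-L) L))) :
    ∫ p, f p ∂cylinderMeasure (Ioo (-L) L) =
      ∫ p, (f p + f (-p.1, p.2)) ∂cylinderMeasure (Ioo 0 L) := by
  have hmeas : Measurable fun p : ℝ × ℝ ↦ (-p.1, p.2) := by fun_prop
  rw [cylinderMeasure_Ioo_neg hL] at hf ⊢
  obtain ⟨hleft, hright⟩ := integrable_add_measure.1 hf
  rw [integral_add_measure hleft hright,
    integral_map hmeas.aemeasurable hright.aestronglyMeasurable]
  exact (integral_add hleft (hright.comp_measurable hmeas)).symm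

variable {α β : ℝ} {u A B : ℝ → ℝ → ℝ}

@[fun_prop]
lemma measurable_gapWeight (α β : ℝ) : Measurable (gapWeight α β) :=
  Measurable.ite measurableSet_Ioo measurable_const measurable_const

lemma gapWeight_mul_lintegral_sq_le (hu : HasCylinderPartials (Ioo 0 Real.pi) u A B)
    (hzero : ∀ s ∈ Ioo (-1 : ℝ) 1, ∃ C, ∀ᶠ θ in 𝓝[>] 0, |u θ s| ≤ C * θ)
    (hgap : ∀ s ∈ Ioo α β, ∃ C, ∀ᶠ θ in 𝓝[<] Real.pi, |u θ s| ≤ C * (Real.pi - θ)) :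
    ∀ᵐ s ∂volume.restrict (Ioo (-1 : ℝ) 1),
      ENNReal.ofReal (gapWeight α β s) * ∫⁻ θ in Ioo 0 Real.pi, ENNReal.ofReal (u θ s ^ 2) ≤
        ∫⁻ θ in Ioo 0 Real.pi, ENNReal.ofReal (A θ s ^ 2) := by
  filter_upwards [hu.ae_deriv_fst_eq, ae_restrict_mem measurableSet_Ioo] with s hderiv hs
  have hA : ∫⁻ θ in Ioo 0 Real.pi, ENNReal.ofReal (A θ s ^ 2) =
      ∫⁻ θ in Ioo 0 Real.pi, ENNReal.ofReal (deriv (fun θ ↦ u θ s) θ ^ 2) :=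
    lintegral_congr_ae (by filter_upwards [hderiv] with θ hθ; rw [hθ])
  rw [hA]
  have hlip := hu.locallyLipschitzOn_fst s hs
  by_cases hmem : s ∈ Ioo α β
  · simpa [gapWeight, hmem] using
      wirtinger_of_zeros one_pos (one_mul _) hlip (hzero s hs) (hgap s hmem)
  · have hk : ((1 / 2 : ℝ)) ^ 2 = gapWeight α β s := by
      rw [gapWeight, if_neg hmem]
      norm_num
    rw [← hk]
    exact wirtinger_of_left_zero one_half_pos (by linarith) hlip (hzero s hs)

lemma ae_snd_mem_Ioo_cylinderMeasure (I : Set ℝ) :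
    ∀ᵐ p ∂cylinderMeasure I, p.2 ∈ Ioo (-1 : ℝ) 1 :=
  Measure.quasiMeasurePreserving_snd.ae (ae_restrict_mem measurableSet_Ioo)

lemma lintegral_cylinderMeasure_ofReal_add {I : Set ℝ} {F G : ℝ × ℝ → ℝ} (hF : Measurable F)
    (hF0 : ∀ p, p.2 ∈ Ioo (-1 : ℝ) 1 → 0 ≤ F p) (hG0 : ∀ p, p.2 ∈ Ioo (-1 : ℝ) 1 → 0 ≤ G p) :
    ∫⁻ p, ENNReal.ofReal (F p + G p) ∂cylinderMeasure I =
      ∫⁻ p, ENNReal.ofReal (F p) ∂cylinderMeasure I +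
        ∫⁻ p, ENNReal.ofReal (G p) ∂cylinderMeasure I := by
  rw [← lintegral_add_left hF.ennreal_ofReal]
  refine lintegral_congr_ae ?_
  filter_upwards [ae_snd_mem_Ioo_cylinderMeasure I] with p hp
  exact ENNReal.ofReal_add (hF0 p hp) (hG0 p hp)

lemma cylinderEnergy_eq_add {I : Set ℝ} (hB : Measurable (Function.uncurry B)) :
    cylinderEnergy I A B =
      ∫⁻ p, ENNReal.ofReal ((1 - p.2 ^ 2) * B p.1 p.2 ^ 2) ∂cylinderMeasure I +
        ∫⁻ p, ENNReal.ofReal (A p.1 p.2 ^ 2 / (1 - p.2 ^ 2)) ∂cylinderMeasure I :=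
  lintegral_cylinderMeasure_ofReal_add (by fun_prop)
    (fun _ hp ↦ mul_nonneg (one_sub_sq_pos_of_mem hp).le (sq_nonneg _))
    (fun _ hp ↦ div_nonneg (sq_nonneg _) (one_sub_sq_pos_of_mem hp).le)

lemma ofReal_mul_lintegral_sq_le_of_legendreGap {c : ℝ} (hc : IsLegendreGapBound α β c)
    {I : Set ℝ} (hI : MeasurableSet I) (hu : HasCylinderPartials I u A B) :
    ENNReal.ofReal c * ∫⁻ p, ENNReal.ofReal (u p.1 p.2 ^ 2) ∂cylinderMeasure I ≤
      ∫⁻ p, ENNReal.ofReal ((1 - p.2 ^ 2) * B p.1 p.2 ^ 2 +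
        gapWeight α β p.2 / (1 - p.2 ^ 2) * u p.1 p.2 ^ 2) ∂cylinderMeasure I := by
  have humeas := hu.measurable
  have hBmeas := hu.measurable_snd
  rw [← lintegral_const_mul' _ _ ENNReal.ofReal_ne_top]
  refine lintegral_prod_mono_of_ae_fst (by fun_prop) (by fun_prop) ?_
  filter_upwards [hu.ae_deriv_snd_eq, ae_restrict_mem hI] with θ hderiv hθ
  rw [lintegral_const_mul' _ _ ENNReal.ofReal_ne_top]
  refine (hc (u θ) (hu.locallyLipschitzOn_snd θ hθ)).trans_eq (lintegral_congr_ae ?_)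
  filter_upwards [hderiv] with s hs
  rw [hs]

lemma lintegral_gapWeight_div_mul_sq_le (hu : HasCylinderPartials (Ioo 0 Real.pi) u A B)
    (hzero : ∀ s ∈ Ioo (-1 : ℝ) 1, ∃ C, ∀ᶠ θ in 𝓝[>] 0, |u θ s| ≤ C * θ)
    (hgap : ∀ s ∈ Ioo α β, ∃ C, ∀ᶠ θ in 𝓝[<] Real.pi, |u θ s| ≤ C * (Real.pi - θ)) :
    ∫⁻ p, ENNReal.ofReal (gapWeight α β p.2 / (1 - p.2 ^ 2) * u p.1 p.2 ^ 2)
        ∂cylinderMeasure (Ioo 0 Real.pi) ≤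
      ∫⁻ p, ENNReal.ofReal (A p.1 p.2 ^ 2 / (1 - p.2 ^ 2)) ∂cylinderMeasure (Ioo 0 Real.pi) := by
  have humeas := hu.measurable
  have hAmeas := hu.measurable_fst
  refine lintegral_prod_mono_of_ae_snd (by fun_prop) (by fun_prop) ?_
  filter_upwards [gapWeight_mul_lintegral_sq_le hu hzero hgap,
    ae_restrict_mem measurableSet_Ioo] with s hle hs
  have hw : 0 ≤ (1 - s ^ 2)⁻¹ := inv_nonneg.2 (one_sub_sq_pos_of_mem hs).le
  have hg : 0 ≤ gapWeight α β s := le_trans (by norm_num) (one_div_four_le_gapWeight α β s)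
  calc ∫⁻ θ in Ioo 0 Real.pi, ENNReal.ofReal (gapWeight α β s / (1 - s ^ 2) * u θ s ^ 2)
      = ENNReal.ofReal (1 - s ^ 2)⁻¹ * (ENNReal.ofReal (gapWeight α β s) *
          ∫⁻ θ in Ioo 0 Real.pi, ENNReal.ofReal (u θ s ^ 2)) := by
        simp only [div_eq_inv_mul, ENNReal.ofReal_mul hw, ENNReal.ofReal_mul hg, mul_assoc,
          lintegral_const_mul' _ _ ENNReal.ofReal_ne_top]
    _ ≤ ENNReal.ofReal (1 - s ^ 2)⁻¹ * ∫⁻ θ in Ioo 0 Real.pi, ENNReal.ofReal (A θ s ^ 2) := by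
        gcongr
    _ = ∫⁻ θ in Ioo 0 Real.pi, ENNReal.ofReal (A θ s ^ 2 / (1 - s ^ 2)) := by
        simp only [div_eq_inv_mul, ENNReal.ofReal_mul hw,
          lintegral_const_mul' _ _ ENNReal.ofReal_ne_top]

lemma ofReal_mul_lintegral_sq_le_cylinderEnergy_of_zeros {c : ℝ} (hc : IsLegendreGapBound α β c)
    (hu : HasCylinderPartials (Ioo 0 Real.pi) u A B)
    (hzero : ∀ s ∈ Ioo (-1 : ℝ) 1, ∃ C, ∀ᶠ θ in 𝓝[>] 0, |u θ s| ≤ C * θ)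
    (hgap : ∀ s ∈ Ioo α β, ∃ C, ∀ᶠ θ in 𝓝[<] Real.pi, |u θ s| ≤ C * (Real.pi - θ)) :
    ENNReal.ofReal c * ∫⁻ p, ENNReal.ofReal (u p.1 p.2 ^ 2) ∂cylinderMeasure (Ioo 0 Real.pi) ≤
      cylinderEnergy (Ioo 0 Real.pi) A B := by
  refine (ofReal_mul_lintegral_sq_le_of_legendreGap hc measurableSet_Ioo hu).trans ?_
  have hB := hu.measurable_snd
  rw [cylinderEnergy_eq_add hB, lintegral_cylinderMeasure_ofReal_add (by fun_prop)
    (fun p hp ↦ mul_nonneg (one_sub_sq_pos_of_mem hp).le (sq_nonneg (B p.1 p.2)))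
    (fun p hp ↦ mul_nonneg (div_nonneg (le_trans (by norm_num)
      (one_div_four_le_gapWeight α β p.2)) (one_sub_sq_pos_of_mem hp).le) (sq_nonneg (u p.1 p.2)))]
  exact add_le_add le_rfl (lintegral_gapWeight_div_mul_sq_le hu hzero hgap)

lemma lintegral_lintegral_sub_sq_snd_le {I : Set ℝ} (hI : MeasurableSet I)
    (hu : HasCylinderPartials I u A B) :
    ∫⁻ θ in I, ∫⁻ s in Ioo (-1 : ℝ) 1, ∫⁻ t in Ioo (-1 : ℝ) 1,
        ENNReal.ofReal ((u θ s - u θ t) ^ 2) ≤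
      2 * ∫⁻ p, ENNReal.ofReal ((1 - p.2 ^ 2) * B p.1 p.2 ^ 2) ∂cylinderMeasure I := by
  have hBmeas := hu.measurable_snd
  rw [cylinderMeasure, lintegral_prod (fun p ↦ ENNReal.ofReal ((1 - p.2 ^ 2) * B p.1 p.2 ^ 2))
      (by fun_prop), ← lintegral_const_mul' _ _ ENNReal.ofNat_ne_top]
  refine lintegral_mono_ae ?_
  filter_upwards [hu.ae_deriv_snd_eq, ae_restrict_mem hI] with θ hderiv hθ
  have hvol : (volume.restrict (Ioo (-1 : ℝ) 1)) univ = 2 := by norm_num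
  have : NeZero (volume.restrict (Ioo (-1 : ℝ) 1)) := ⟨by simp⟩
  calc ∫⁻ s in Ioo (-1 : ℝ) 1, ∫⁻ t in Ioo (-1 : ℝ) 1, ENNReal.ofReal ((u θ s - u θ t) ^ 2)
      ≤ 2 * 2 * ∫⁻ s in Ioo (-1 : ℝ) 1, ENNReal.ofReal ((u θ s - u θ 0) ^ 2) := by
        simpa only [hvol] using lintegral_lintegral_sub_sq_le
          (μ := volume.restrict (Ioo (-1 : ℝ) 1))
          hu.measurable.of_uncurry_left.aestronglyMeasurable (u θ 0)
    _ ≤ 2 * ∫⁻ s in Ioo (-1 : ℝ) 1, ENNReal.ofReal ((1 - s ^ 2) * deriv (u θ) s ^ 2) := by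
        rw [mul_assoc]
        gcongr
        exact poincare_legendre (hu.locallyLipschitzOn_snd θ hθ)
    _ = 2 * ∫⁻ s in Ioo (-1 : ℝ) 1, ENNReal.ofReal ((1 - s ^ 2) * B θ s ^ 2) := by
        congr 1
        refine lintegral_congr_ae ?_
        filter_upwards [hderiv] with s hs
        rw [hs]

lemma lintegral_lintegral_sub_sq_fst_le (hu : HasCylinderPartials (Ioo 0 Real.pi) u A B) :
    ∫⁻ s in Ioo (-1 : ℝ) 1, ∫⁻ θ in Ioo 0 Real.pi, ∫⁻ φ in Ioo 0 Real.pi,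
        ENNReal.ofReal ((u θ s - u φ s) ^ 2) ≤
      2 * ENNReal.ofReal Real.pi *
        ∫⁻ p, ENNReal.ofReal (A p.1 p.2 ^ 2) ∂cylinderMeasure (Ioo 0 Real.pi) := by
  have hAmeas := hu.measurable_fst
  rw [cylinderMeasure, lintegral_prod_symm (fun p ↦ ENNReal.ofReal (A p.1 p.2 ^ 2)) (by fun_prop),
    ← lintegral_const_mul' _ _ (by finiteness)]
  refine lintegral_mono_ae ?_
  filter_upwards [hu.ae_deriv_fst_eq, ae_restrict_mem measurableSet_Ioo] with s hderiv hs
  have hvol : (volume.restrict (Ioo 0 Real.pi)) univ = ENNReal.ofReal Real.pi := by simp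
  have : NeZero (volume.restrict (Ioo 0 Real.pi)) := ⟨by simp [Real.pi_pos]⟩
  calc ∫⁻ θ in Ioo 0 Real.pi, ∫⁻ φ in Ioo 0 Real.pi, ENNReal.ofReal ((u θ s - u φ s) ^ 2)
      ≤ 2 * ENNReal.ofReal Real.pi *
          ∫⁻ θ in Ioo 0 Real.pi, ENNReal.ofReal ((u θ s - u (Real.pi / 2) s) ^ 2) := by
        simpa only [hvol] using lintegral_lintegral_sub_sq_le
          (μ := volume.restrict (Ioo 0 Real.pi))
          hu.measurable.of_uncurry_right.aestronglyMeasurable (u (Real.pi / 2) s)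
    _ ≤ 2 * ENNReal.ofReal Real.pi *
          ∫⁻ θ in Ioo 0 Real.pi, ENNReal.ofReal (deriv (fun θ ↦ u θ s) θ ^ 2) := by
        exact mul_le_mul_right (poincare_Ioo_zero_pi (hu.locallyLipschitzOn_fst s hs)) _
    _ = 2 * ENNReal.ofReal Real.pi * ∫⁻ θ in Ioo 0 Real.pi, ENNReal.ofReal (A θ s ^ 2) := by
        congr 1
        refine lintegral_congr_ae ?_
        filter_upwards [hderiv] with θ hθ
        rw [hθ]

lemma lintegral_sq_le_lintegral_sq_div_one_sub_sq (I : Set ℝ) (A : ℝ → ℝ → ℝ) :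
    ∫⁻ p, ENNReal.ofReal (A p.1 p.2 ^ 2) ∂cylinderMeasure I ≤
      ∫⁻ p, ENNReal.ofReal (A p.1 p.2 ^ 2 / (1 - p.2 ^ 2)) ∂cylinderMeasure I := by
  refine lintegral_mono_ae ?_
  filter_upwards [ae_snd_mem_Ioo_cylinderMeasure I] with p hp
  exact ENNReal.ofReal_le_ofReal (le_div_self (sq_nonneg _) (one_sub_sq_pos_of_mem hp)
    (by linarith [sq_nonneg p.2]))

lemma lintegral_sq_le_cylinderEnergy_of_integral_eq_zero
    (hu : HasCylinderPartials (Ioo 0 Real.pi) u A B)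
    (hfin : ∫⁻ p, ENNReal.ofReal (u p.1 p.2 ^ 2) ∂cylinderMeasure (Ioo 0 Real.pi) ≠ ⊤)
    (hmean : ∫ p, u p.1 p.2 ∂cylinderMeasure (Ioo 0 Real.pi) = 0) :
    ∫⁻ p, ENNReal.ofReal (u p.1 p.2 ^ 2) ∂cylinderMeasure (Ioo 0 Real.pi) ≤
      cylinderEnergy (Ioo 0 Real.pi) A B := by
  have hvolθ : (volume.restrict (Ioo 0 Real.pi)) univ = ENNReal.ofReal Real.pi := by simp
  have hvols : (volume.restrict (Ioo (-1 : ℝ) 1)) univ = 2 := by norm_num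
  have hL : MemLp (Function.uncurry u) 2 (cylinderMeasure (Ioo 0 Real.pi)) :=
    memLp_two_of_lintegral_ofReal_sq_ne_top hu.measurable.aestronglyMeasurable hfin
  have hvar := efron_stein hu.measurable hL hmean
  rw [hvolθ, hvols] at hvar
  have hA := lintegral_sq_le_lintegral_sq_div_one_sub_sq (Ioo 0 Real.pi) A
  have humeas := hu.measurable
  rw [cylinderEnergy_eq_add hu.measurable_snd]
  refine (ENNReal.mul_le_mul_iff_right (a := 2 * (ENNReal.ofReal Real.pi * 2))
    (by simp [Real.pi_pos]) (by finiteness)).1 ?_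
  calc 2 * (ENNReal.ofReal Real.pi * 2) *
        ∫⁻ p, ENNReal.ofReal (u p.1 p.2 ^ 2) ∂cylinderMeasure (Ioo 0 Real.pi)
      = 2 * (ENNReal.ofReal Real.pi * 2) * ∫⁻ θ in Ioo 0 Real.pi, ∫⁻ s in Ioo (-1 : ℝ) 1,
          ENNReal.ofReal (u θ s ^ 2) := by
        rw [cylinderMeasure, lintegral_prod (fun p ↦ ENNReal.ofReal (u p.1 p.2 ^ 2)) (by fun_prop)]
    _ ≤ ENNReal.ofReal Real.pi * (2 * ∫⁻ p, ENNReal.ofReal ((1 - p.2 ^ 2) * B p.1 p.2 ^ 2)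
            ∂cylinderMeasure (Ioo 0 Real.pi)) +
          2 * (2 * ENNReal.ofReal Real.pi *
            ∫⁻ p, ENNReal.ofReal (A p.1 p.2 ^ 2) ∂cylinderMeasure (Ioo 0 Real.pi)) :=
        hvar.trans (by
          gcongr
          · exact lintegral_lintegral_sub_sq_snd_le measurableSet_Ioo hu
          · exact lintegral_lintegral_sub_sq_fst_le hu)
    _ ≤ 2 * (ENNReal.ofReal Real.pi * 2) *
          (∫⁻ p, ENNReal.ofReal ((1 - p.2 ^ 2) * B p.1 p.2 ^ 2)
            ∂cylinderMeasure (Ioo 0 Real.pi) +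
          ∫⁻ p, ENNReal.ofReal (A p.1 p.2 ^ 2) ∂cylinderMeasure (Ioo 0 Real.pi)) := by
        rw [mul_add, ← mul_assoc, ← mul_assoc 2 (2 * _)]
        gcongr ?_ * _ + ?_ * _
        · exact le_mul_of_one_le_left' one_le_two
        · exact le_of_eq (by ring)
    _ ≤ _ := by gcongr

variable {G : ℝ → ℝ → ℝ}

lemma lintegral_sq_even_add_odd (hG : Measurable (Function.uncurry G)) {L : ℝ} (hL : 0 < L) :
    ∫⁻ p, ENNReal.ofReal ((G p.1 p.2 + G (-p.1) p.2) ^ 2) ∂cylinderMeasure (Ioo 0 L) +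
        ∫⁻ p, ENNReal.ofReal ((G p.1 p.2 - G (-p.1) p.2) ^ 2) ∂cylinderMeasure (Ioo 0 L) =
      2 * ∫⁻ p, ENNReal.ofReal (G p.1 p.2 ^ 2) ∂cylinderMeasure (Ioo (-L) L) := by
  rw [lintegral_cylinderMeasure_Ioo_neg hL (by fun_prop), ← lintegral_add_left (by fun_prop),
    ← lintegral_const_mul' _ _ ENNReal.ofNat_ne_top]
  refine lintegral_congr fun p ↦ ?_
  rw [← ENNReal.ofReal_add (by positivity) (by positivity),
    ← ENNReal.ofReal_add (by positivity) (by positivity), ← ENNReal.ofReal_ofNat,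
    ← ENNReal.ofReal_mul zero_le_two]
  ring_nf

lemma cylinderEnergy_even_add_odd (hA : Measurable (Function.uncurry A))
    (hB : Measurable (Function.uncurry B)) {L : ℝ} (hL : 0 < L) :
    cylinderEnergy (Ioo 0 L) (fun θ s ↦ A θ s + -A (-θ) s) (fun θ s ↦ B θ s + B (-θ) s) +
        cylinderEnergy (Ioo 0 L) (fun θ s ↦ A θ s - -A (-θ) s) (fun θ s ↦ B θ s - B (-θ) s) =
      2 * cylinderEnergy (Ioo (-L) L) A B := by
  unfold cylinderEnergy
  rw [lintegral_cylinderMeasure_Ioo_neg hL (by fun_prop), ← lintegral_add_left (by fun_prop),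
    ← lintegral_const_mul' _ _ ENNReal.ofNat_ne_top]
  refine lintegral_congr_ae ?_
  filter_upwards [ae_snd_mem_Ioo_cylinderMeasure (Ioo 0 L)] with p hp
  have hw : 0 < 1 - p.2 ^ 2 := one_sub_sq_pos_of_mem hp
  rw [← ENNReal.ofReal_add (by positivity) (by positivity),
    ← ENNReal.ofReal_add (by positivity) (by positivity), ← ENNReal.ofReal_ofNat,
    ← ENNReal.ofReal_mul zero_le_two]
  ring_nf

lemma eventually_abs_sub_neg_le {L : ℝ} (hL : 0 < L) {f : ℝ → ℝ}
    (hf : LocallyLipschitzOn (Ioo (-L) L) f) :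
    ∃ C, ∀ᶠ x in 𝓝[>] (0 : ℝ), |f x - f (-x)| ≤ C * x := by
  obtain ⟨C, hC⟩ := exists_eventually_abs_sub_le_of_locallyLipschitzOn hf
    (Ioo_mem_nhds (neg_lt_zero.2 hL) hL)
  have hneg : ∀ᶠ x in 𝓝 (0 : ℝ), |f (-x) - f 0| ≤ C * |-x - 0| :=
    (continuous_neg.tendsto' (0 : ℝ) 0 neg_zero).eventually hC
  refine ⟨2 * C, ?_⟩
  filter_upwards [hC.filter_mono nhdsWithin_le_nhds, hneg.filter_mono nhdsWithin_le_nhds,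
    self_mem_nhdsWithin] with x hx hnx hpos
  have habs : |x| = x := abs_of_pos hpos
  rw [sub_zero, habs] at hx
  rw [sub_zero, abs_neg, habs] at hnx
  calc |f x - f (-x)| ≤ |f x - f 0| + |f 0 - f (-x)| := abs_sub_le _ _ _
    _ ≤ 2 * C * x := by rw [abs_sub_comm (f 0)]; linarith

theorem ofReal_mul_lintegral_sq_le_cylinderEnergy_of_gap {c : ℝ} (hc : IsLegendreGapBound α β c)
    (hc1 : c ≤ 1) (hG : HasCylinderPartials (Ioo (-Real.pi) Real.pi) G A B)
    (hgap : ∀ s ∈ Ioo α β, ∃ C, ∀ᶠ θ in 𝓝[<] Real.pi,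
      |G θ s - G (-θ) s| ≤ C * (Real.pi - θ))
    (hfin : ∫⁻ p, ENNReal.ofReal (G p.1 p.2 ^ 2)
      ∂cylinderMeasure (Ioo (-Real.pi) Real.pi) ≠ ⊤)
    (hmean : ∫ p, G p.1 p.2 ∂cylinderMeasure (Ioo (-Real.pi) Real.pi) = 0) :
    ENNReal.ofReal c * ∫⁻ p, ENNReal.ofReal (G p.1 p.2 ^ 2)
        ∂cylinderMeasure (Ioo (-Real.pi) Real.pi) ≤
      cylinderEnergy (Ioo (-Real.pi) Real.pi) A B := by
  have hpi := Real.pi_pos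
  have hsub : Ioo 0 Real.pi ⊆ Ioo (-Real.pi) Real.pi := Ioo_subset_Ioo_left (neg_nonpos.2 hpi.le)
  have hnorm := lintegral_sq_even_add_odd hG.measurable hpi
  have hint : Integrable (fun p : ℝ × ℝ ↦ G p.1 p.2)
      (cylinderMeasure (Ioo (-Real.pi) Real.pi)) := by
    have : IsFiniteMeasure (cylinderMeasure (Ioo (-Real.pi) Real.pi)) := by
      unfold cylinderMeasure
      infer_instance
    exact (memLp_two_of_lintegral_ofReal_sq_ne_top hG.measurable.aestronglyMeasurable
      hfin).integrable one_le_two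
  have hodd := ofReal_mul_lintegral_sq_le_cylinderEnergy_of_zeros hc
    ((hG.sub hG.reflect).mono hsub)
    (fun s hs ↦ eventually_abs_sub_neg_le hpi (hG.locallyLipschitzOn_fst s hs)) hgap
  have heven := lintegral_sq_le_cylinderEnergy_of_integral_eq_zero
    ((hG.add hG.reflect).mono hsub)
    (ne_top_of_le_ne_top (by rw [hnorm]; finiteness) le_self_add)
    ((integral_cylinderMeasure_Ioo_neg hpi hint).symm.trans hmean)
  refine (ENNReal.mul_le_mul_iff_right two_ne_zero ENNReal.ofNat_ne_top).1 ?_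
  rw [mul_left_comm, ← hnorm, mul_add,
    ← cylinderEnergy_even_add_odd hG.measurable_fst hG.measurable_snd hpi]
  exact add_le_add ((mul_le_of_le_one_left' (ENNReal.ofReal_le_one.2 hc1)).trans heven) hodd

end Cylinder

/-! ### Uniformly distributed measures -/

section UniformlyDistributed

variable {X : Type*} [PseudoMetricSpace X] [MeasurableSpace X] {μ ν : Measure X} {S : Set X} {o : X}

/-- The measure `μ` is carried by `S`, and balls of equal radius centred on `S` have equal mass. -/
structure IsUniformlyDistributedOn (μ : Measure X) (S : Set X) : Prop where
  ae_mem : ∀ᵐ x ∂μ, x ∈ S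
  measure_ball_eq : ∀ r, ∀ x ∈ S, ∀ y ∈ S, μ (ball x r) = μ (ball y r)

namespace IsUniformlyDistributedOn

lemma measure_ball_ne_zero [SecondCountableTopology X] (hμ : IsUniformlyDistributedOn μ S)
    (hμ0 : μ ≠ 0) (ho : o ∈ S) {r : ℝ} (hr : 0 < r) : μ (ball o r) ≠ 0 := by
  intro hzero
  have hS : μ S = 0 := measure_null_of_locally_null S fun x hx ↦
    ⟨ball x r, mem_nhdsWithin_of_mem_nhds (ball_mem_nhds x hr),
      (hμ.measure_ball_eq r x hx o ho).trans hzero⟩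
  refine hμ0 (Measure.measure_univ_eq_zero.1 ?_)
  rw [← union_compl_self S]
  exact measure_union_null hS hμ.ae_mem

lemma prod_dist_lt [OpensMeasurableSpace X] [SecondCountableTopology X] [SFinite ν]
    (hν : IsUniformlyDistributedOn ν S) (hμ : ∀ᵐ x ∂μ, x ∈ S) (ho : o ∈ S) (r : ℝ) :
    (μ.prod ν) {p | dist p.1 p.2 < r} = ν (ball o r) * μ univ := by
  have hopen : MeasurableSet {p : X × X | dist p.1 p.2 < r} :=
    (isOpen_lt (by fun_prop) continuous_const).measurableSet
  rw [Measure.prod_apply hopen, ← lintegral_const]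
  refine lintegral_congr_ae ?_
  filter_upwards [hμ] with x hx
  rw [← hν.measure_ball_eq r x hx o ho]
  congr 1
  ext y
  simp only [mem_preimage, mem_ofPred_eq, mem_ball, dist_comm]

-- Both sides count the pairs at distance less than `r` whose first entry lies in `A`.
lemma measure_ball_mul_le [OpensMeasurableSpace X] [SecondCountableTopology X] [SFinite μ]
    [SFinite ν] (hμ : IsUniformlyDistributedOn μ S) (hν : IsUniformlyDistributedOn ν S)
    (ho : o ∈ S) (r : ℝ) (A : Set X) :
    ν (ball o r) * μ A ≤ μ (ball o r) * ν (thickening r A) := by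
  have hopen : MeasurableSet {p : X × X | dist p.1 p.2 < r} :=
    (isOpen_lt (by fun_prop) continuous_const).measurableSet
  calc ν (ball o r) * μ A = ((μ.restrict A).prod ν) {p | dist p.1 p.2 < r} := by
        rw [hν.prod_dist_lt (ae_restrict_of_ae hμ.ae_mem) ho, Measure.restrict_apply_univ]
    _ = (μ.prod ν) ({p | dist p.1 p.2 < r} ∩ A ×ˢ univ) := by
        conv_lhs => rw [← Measure.restrict_univ (μ := ν), Measure.prod_restrict,
          Measure.restrict_apply hopen]
    _ ≤ (μ.prod ν) ({p | dist p.1 p.2 < r} ∩ univ ×ˢ thickening r A) :=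
        measure_mono fun p hp ↦ ⟨hp.1, mem_univ _,
          mem_thickening_iff.2 ⟨p.1, hp.2.1, by rw [dist_comm]; exact hp.1⟩⟩
    _ = (μ.prod (ν.restrict (thickening r A))) {p | dist p.1 p.2 < r} := by
        conv_rhs => rw [← Measure.restrict_univ (μ := μ), Measure.prod_restrict,
          Measure.restrict_apply hopen]
    _ = ((ν.restrict (thickening r A)).prod μ) {p | dist p.1 p.2 < r} := by
        rw [← Measure.prod_swap, Measure.map_apply measurable_swap hopen]
        simp only [preimage_ofPred_eq, Prod.fst_swap, Prod.snd_swap, dist_comm]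
    _ = μ (ball o r) * ν (thickening r A) := by
        rw [hμ.prod_dist_lt (ae_restrict_of_ae hν.ae_mem) ho, Measure.restrict_apply_univ]

variable [BorelSpace X] [SecondCountableTopology X] [IsFiniteMeasure μ] [IsFiniteMeasure ν]

lemma measure_univ_mul_le_of_isClosed (hμ : IsUniformlyDistributedOn μ S)
    (hν : IsUniformlyDistributedOn ν S) (hν0 : ν ≠ 0) {F : Set X} (hF : IsClosed F) :
    ν univ * μ F ≤ μ univ * ν F := by
  have : NeBot (ae ν) := ae_neBot.2 hν0
  obtain ⟨o, ho⟩ := hν.ae_mem.exists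
  have hthick : ∀ r > 0, ν univ * μ F ≤ μ univ * ν (thickening r F) := by
    intro r hr
    have huniv : μ (ball o r) * ν univ ≤ ν (ball o r) * μ univ :=
      (hν.measure_ball_mul_le hμ ho r univ).trans (by gcongr; exact subset_univ _)
    refine (ENNReal.mul_le_mul_iff_right (hν.measure_ball_ne_zero hν0 ho hr)
      (measure_ne_top _ _)).1 ?_
    calc ν (ball o r) * (ν univ * μ F) = ν univ * (ν (ball o r) * μ F) := by ring
      _ ≤ ν univ * (μ (ball o r) * ν (thickening r F)) := by
          gcongr ν univ * ?_
          exact hμ.measure_ball_mul_le hν ho r F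
      _ = μ (ball o r) * ν univ * ν (thickening r F) := by ring
      _ ≤ ν (ball o r) * μ univ * ν (thickening r F) := by gcongr ?_ * _
      _ = ν (ball o r) * (μ univ * ν (thickening r F)) := by ring
  have htendsto : Tendsto (fun r ↦ μ univ * ν (thickening r F)) (𝓝[>] 0) (𝓝 (μ univ * ν F)) :=
    ENNReal.Tendsto.const_mul
      (tendsto_measure_thickening_of_isClosed ⟨1, one_pos, measure_ne_top _ _⟩ hF)
      (Or.inr (measure_ne_top _ _))
  exact ge_of_tendsto htendsto (eventually_mem_nhdsWithin.mono hthick)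

theorem measure_univ_smul_eq (hμ : IsUniformlyDistributedOn μ S)
    (hν : IsUniformlyDistributedOn ν S) (hμ0 : μ ≠ 0) (hν0 : ν ≠ 0) :
    ν univ • μ = μ univ • ν := by
  have hclosed : ∀ F, IsClosed F → (ν univ • μ) F = (μ univ • ν) F := fun F hF ↦
    le_antisymm (hμ.measure_univ_mul_le_of_isClosed hν hν0 hF)
      (hν.measure_univ_mul_le_of_isClosed hμ hμ0 hF)
  have : IsFiniteMeasure (ν univ • μ) := Measure.smul_finite μ (measure_ne_top _ _)
  refine ext_of_generate_finite {s | IsClosed s} ?_ isPiSystem_isClosed hclosed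
    (hclosed _ isClosed_univ)
  rw [BorelSpace.measurable_eq (α := X), borel_eq_generateFrom_isClosed]

theorem exists_eq_smul (hμ : IsUniformlyDistributedOn μ S)
    (hν : IsUniformlyDistributedOn ν S) (hμ0 : μ ≠ 0) (hν0 : ν ≠ 0) :
    ∃ c : ℝ≥0∞, c ≠ 0 ∧ c ≠ ⊤ ∧ μ = c • ν := by
  have hνu : ν univ ≠ 0 := Measure.measure_univ_ne_zero.2 hν0
  refine ⟨(ν univ)⁻¹ * μ univ, mul_ne_zero (ENNReal.inv_ne_zero.2 (measure_ne_top _ _))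
    (Measure.measure_univ_ne_zero.2 hμ0), by finiteness, ?_⟩
  rw [mul_smul, ← hμ.measure_univ_smul_eq hν hμ0 hν0, smul_smul,
    ENNReal.inv_mul_cancel hνu (measure_ne_top _ _), one_smul]

end IsUniformlyDistributedOn

end UniformlyDistributed

/-! ### The area measure of the sphere -/

section SphereMeasure

lemma isUniformlyDistributedOn_sphere {E : Type*} [NormedAddCommGroup E] [InnerProductSpace ℝ E]
    [MeasurableSpace E] [BorelSpace E] {μ : Measure E} {r : ℝ}
    (hsphere : ∀ᵐ x ∂μ, x ∈ sphere (0 : E) r)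
    (hinv : ∀ T : E ≃ₗᵢ[ℝ] E, MeasurePreserving T μ μ) :
    IsUniformlyDistributedOn μ (sphere (0 : E) r) where
  ae_mem := hsphere
  measure_ball_eq ε x hx y hy := by
    obtain ⟨T, rfl⟩ : ∃ T : E ≃ₗᵢ[ℝ] E, T x = y :=
      ⟨_, Submodule.reflection_sub
        ((mem_sphere_zero_iff_norm.1 hx).trans (mem_sphere_zero_iff_norm.1 hy).symm)⟩
    rw [← (hinv T).measure_preimage (s := ball (T x) ε) measurableSet_ball.nullMeasurableSet,
      T.preimage_ball, T.symm_apply_apply]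

lemma isUniformlyDistributedOn_hausdorffMeasure_restrict_sphere {E : Type*} [NormedAddCommGroup E]
    [InnerProductSpace ℝ E] [MeasurableSpace E] [BorelSpace E] (d r : ℝ) :
    IsUniformlyDistributedOn (μH[d].restrict (sphere (0 : E) r)) (sphere (0 : E) r) := by
  refine isUniformlyDistributedOn_sphere (ae_restrict_mem isClosed_sphere.measurableSet) fun T ↦ ?_
  have hpre : T ⁻¹' sphere (0 : E) r = sphere 0 r := by rw [T.preimage_sphere, map_zero]
  have hT : MeasurePreserving T μH[d] μH[d] :=
    T.toIsometryEquiv.measurePreserving_hausdorffMeasure d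
  simpa only [hpre] using hT.restrict_preimage
    (isClosed_sphere (x := (0 : E)) (ε := r)).measurableSet

section ConeMeasure

variable (E : Type*) [NormedAddCommGroup E] [InnerProductSpace ℝ E] [FiniteDimensional ℝ E]
  [MeasurableSpace E] [BorelSpace E]

/-- The cone measure on the unit sphere: the mass of `A` is the volume of the part of the unit ball
that projects radially to `A`. -/
def coneMeasure : Measure E := (volume.restrict (ball (0 : E) 1)).map NormedSpace.normalize

variable {E}

lemma measurable_normalize : Measurable (NormedSpace.normalize : E → E) :=
  measurable_norm.inv.smul measurable_id

instance : IsFiniteMeasure (coneMeasure E) := by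
  have : IsFiniteMeasure (volume.restrict (ball (0 : E) 1)) :=
    ⟨by simpa only [Measure.restrict_apply_univ] using measure_ball_lt_top⟩
  unfold coneMeasure
  infer_instance

lemma coneMeasure_ne_zero : coneMeasure E ≠ 0 := by
  rw [coneMeasure, Ne, Measure.map_eq_zero_iff measurable_normalize.aemeasurable,
    Measure.restrict_eq_zero]
  exact (measure_ball_pos volume (0 : E) one_pos).ne'

lemma ae_coneMeasure_iff [Nontrivial E] {P : E → Prop} (hP : MeasurableSet {x | P x}) :
    (∀ᵐ x ∂coneMeasure E, P x) ↔
      ∀ᵐ x ∂volume.restrict (ball (0 : E) 1), x ≠ 0 → P (NormedSpace.normalize x) := by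
  have hne : ∀ᵐ x ∂volume.restrict (ball (0 : E) 1), x ≠ 0 :=
    ae_restrict_of_ae ((countable_singleton (0 : E)).ae_notMem volume)
  rw [coneMeasure, ae_map_iff measurable_normalize.aemeasurable hP]
  exact eventually_congr (hne.mono fun x hx ↦ (imp_iff_right hx).symm)

lemma isUniformlyDistributedOn_coneMeasure [Nontrivial E] :
    IsUniformlyDistributedOn (coneMeasure E) (sphere (0 : E) 1) := by
  refine isUniformlyDistributedOn_sphere
    ((ae_coneMeasure_iff isClosed_sphere.measurableSet).2 (Eventually.of_forall fun x hx ↦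
      mem_sphere_zero_iff_norm.2 (NormedSpace.norm_normalize_eq_one_iff.2 hx)))
    fun T ↦ ⟨T.continuous.measurable, ?_⟩
  have hball : MeasurePreserving T (volume.restrict (ball (0 : E) 1))
      (volume.restrict (ball (0 : E) 1)) := by
    have hpre : T ⁻¹' ball (0 : E) 1 = ball 0 1 := by rw [T.preimage_ball, map_zero]
    simpa only [hpre] using
      T.measurePreserving.restrict_preimage (s := ball (0 : E) 1) measurableSet_ball
  have hcomm : T ∘ NormedSpace.normalize = NormedSpace.normalize ∘ T := by
    ext x
    simp only [Function.comp_apply, NormedSpace.normalize, map_smul, T.norm_map]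
  rw [coneMeasure, Measure.map_map T.continuous.measurable measurable_normalize, hcomm,
    ← Measure.map_map measurable_normalize T.continuous.measurable, hball.map_eq]

end ConeMeasure

lemma hausdorffMeasure_image_lt_top {ι Y : Type*} [Fintype ι] [MetricSpace Y]
    [MeasurableSpace Y] [BorelSpace Y] {f : (ι → ℝ) → Y} {C : Set (ι → ℝ)} (hC : IsCompact C)
    (hf : LocallyLipschitzOn C f) : μH[Fintype.card ι] (f '' C) < ⊤ := by
  obtain ⟨K, hK⟩ := hf.exists_lipschitzOnWith_of_compact hC
  refine (hK.hausdorffMeasure_image_le (Nat.cast_nonneg _)).trans_lt (ENNReal.mul_lt_top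
    (ENNReal.rpow_lt_top_of_nonneg (Nat.cast_nonneg _) ENNReal.coe_ne_top) ?_)
  rw [hausdorffMeasure_pi_real]
  exact hC.measure_lt_top

lemma norm_sq_eq_add_add (x : Rn 3) : ‖x‖ ^ 2 = x 0 ^ 2 + x 1 ^ 2 + x 2 ^ 2 := by
  simp only [EuclideanSpace.norm_sq_eq, Fin.sum_univ_three, Real.norm_eq_abs, sq_abs]

lemma norm_eq_one_of_mem_S2 {x : Rn 3} (hx : x ∈ S2) : ‖x‖ = 1 := mem_sphere_zero_iff_norm.1 hx

/-- The point of `S²` with longitude `p 0` and latitude `p 1`. -/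
def sphericalPoint (p : Fin 2 → ℝ) : Rn 3 :=
  !₂[Real.cos (p 1) * Real.cos (p 0), Real.cos (p 1) * Real.sin (p 0), Real.sin (p 1)]

lemma contDiff_sphericalPoint : ContDiff ℝ 1 sphericalPoint := by
  have hcoord (i : Fin 2) : ContDiff ℝ 1 fun p : Fin 2 → ℝ ↦ p i := contDiff_apply ℝ ℝ i
  rw [contDiff_euclidean]
  intro i
  fin_cases i
  · exact (hcoord 1).cos.mul (hcoord 0).cos
  · exact (hcoord 1).cos.mul (hcoord 0).sin
  · exact (hcoord 1).sin

lemma S2_subset_image_sphericalPoint :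
    S2 ⊆ sphericalPoint '' Icc (fun _ ↦ -Real.pi) (fun _ ↦ Real.pi) := by
  intro x hx
  have hsum : x 0 ^ 2 + x 1 ^ 2 + x 2 ^ 2 = 1 := by
    rw [← norm_sq_eq_add_add, norm_eq_one_of_mem_S2 hx, one_pow]
  have hx2 : x 2 ^ 2 ≤ 1 := by linarith [sq_nonneg (x 0), sq_nonneg (x 1)]
  obtain ⟨hlo, hhi⟩ := abs_le.1 ((sq_le_one_iff_abs_le_one _).1 hx2)
  have hpi := Real.pi_pos
  set z : ℂ := ⟨x 0, x 1⟩
  have hz : ‖z‖ = Real.cos (Real.arcsin (x 2)) := by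
    rw [Real.cos_arcsin, Complex.norm_def, Complex.normSq_mk]
    congr 1
    linarith
  refine ⟨![z.arg, Real.arcsin (x 2)], ⟨fun i ↦ ?_, fun i ↦ ?_⟩, ?_⟩
  · fin_cases i
    · exact (Complex.neg_pi_lt_arg z).le
    · exact le_trans (by linarith) (Real.neg_pi_div_two_le_arcsin (x 2))
  · fin_cases i
    · exact Complex.arg_le_pi z
    · exact (Real.arcsin_le_pi_div_two (x 2)).trans (by linarith)
  · ext i
    fin_cases i
    · simpa [sphericalPoint, hz] using Complex.norm_mul_cos_arg z
    · simpa [sphericalPoint, hz] using Complex.norm_mul_sin_arg z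
    · simpa [sphericalPoint] using Real.sin_arcsin hlo hhi

lemma hausdorffMeasure_S2_lt_top : μH[(2 : ℝ)] S2 < ⊤ := by
  have hfin := hausdorffMeasure_image_lt_top
    (isCompact_Icc (a := fun _ : Fin 2 ↦ -Real.pi) (b := fun _ ↦ Real.pi))
    contDiff_sphericalPoint.locallyLipschitz.locallyLipschitzOn
  rw [Fintype.card_fin, Nat.cast_ofNat] at hfin
  exact (measure_mono S2_subset_image_sphericalPoint).trans_lt hfin

theorem exists_hausdorffMeasure_restrict_S2_eq_smul (h0 : μH[(2 : ℝ)].restrict S2 ≠ 0) :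
    ∃ c : ℝ≥0∞, c ≠ 0 ∧ c ≠ ⊤ ∧ μH[(2 : ℝ)].restrict S2 = c • coneMeasure (Rn 3) := by
  have : IsFiniteMeasure (μH[(2 : ℝ)].restrict (sphere (0 : Rn 3) 1)) :=
    ⟨by rw [Measure.restrict_apply_univ]; exact hausdorffMeasure_S2_lt_top⟩
  exact (isUniformlyDistributedOn_hausdorffMeasure_restrict_sphere 2 1).exists_eq_smul
    isUniformlyDistributedOn_coneMeasure h0 coneMeasure_ne_zero

end SphereMeasure

/-! ### Cylindrical coordinates on the sphere -/

section CylindricalCoordinates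

/-- The point of the unit sphere with longitude `θ` and height `s`. -/
def cylToSphere (θ s : ℝ) : Rn 3 := !₂[√(1 - s ^ 2) * Real.cos θ, √(1 - s ^ 2) * Real.sin θ, s]

lemma continuous_cylToSphere : Continuous fun p : ℝ × ℝ ↦ cylToSphere p.1 p.2 := by
  refine (PiLp.continuous_toLp 2 _).comp (continuous_pi fun i ↦ ?_)
  fin_cases i <;> dsimp <;> fun_prop

lemma norm_cylToSphere (θ : ℝ) {s : ℝ} (hs : s ∈ Ioo (-1 : ℝ) 1) : ‖cylToSphere θ s‖ = 1 := by
  have hsq : ‖cylToSphere θ s‖ ^ 2 = 1 := by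
    rw [norm_sq_eq_add_add]
    change (√(1 - s ^ 2) * Real.cos θ) ^ 2 + (√(1 - s ^ 2) * Real.sin θ) ^ 2 + s ^ 2 = 1
    rw [mul_pow, mul_pow, sq_sqrt_one_sub_sq hs]
    linear_combination (1 - s ^ 2) * Real.sin_sq_add_cos_sq θ
  exact (pow_eq_one_iff_of_nonneg (norm_nonneg _) two_ne_zero).1 hsq

/-- The identification of `ℝ³` with `ℝ × ℝ²` given by `(x, y, z) ↦ (z, (x, y))`. -/
def heightPlaneEquiv : Rn 3 ≃ᵐ ℝ × (ℝ × ℝ) :=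
  ((MeasurableEquiv.toLp 2 (Fin 3 → ℝ)).symm.trans
    (MeasurableEquiv.piFinSuccAbove (fun _ : Fin 3 ↦ ℝ) 2)).trans
    (MeasurableEquiv.prodCongr (MeasurableEquiv.refl ℝ) MeasurableEquiv.finTwoArrow)

lemma measurePreserving_heightPlaneEquiv : MeasurePreserving heightPlaneEquiv :=
  ((EuclideanSpace.volume_preserving_symm_measurableEquiv_toLp (Fin 3)).trans
    (volume_preserving_piFinSuccAbove (fun _ : Fin 3 ↦ ℝ) 2)).trans
    ((MeasurePreserving.id volume).prod (volume_preserving_finTwoArrow ℝ))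

lemma heightPlaneEquiv_symm_apply (z x y : ℝ) :
    heightPlaneEquiv.symm (z, (x, y)) = !₂[x, y, z] := by
  rw [MeasurableEquiv.symm_apply_eq]
  rfl

lemma lintegral_eq_lintegral_cylindrical {H : Rn 3 → ℝ≥0∞} (hH : Measurable H) :
    ∫⁻ x, H x = ∫⁻ θ in Ioo (-Real.pi) Real.pi, ∫⁻ ρ in Ioi (0 : ℝ), ∫⁻ z : ℝ,
      ENNReal.ofReal ρ * H !₂[ρ * Real.cos θ, ρ * Real.sin θ, z] := by
  have hmeas : Measurable fun q : ℝ × (ℝ × ℝ) ↦ H (heightPlaneEquiv.symm q) :=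
    hH.comp heightPlaneEquiv.symm.measurable
  have hpolar : Measurable fun p : ℝ × ℝ ↦ (p.1 * Real.cos p.2, p.1 * Real.sin p.2) := by fun_prop
  rw [← measurePreserving_heightPlaneEquiv.symm.lintegral_comp_emb
      heightPlaneEquiv.symm.measurableEmbedding H,
    Measure.volume_eq_prod, lintegral_prod_symm' _ hmeas, ← lintegral_comp_polarCoord_symm,
    polarCoord_target, Measure.volume_eq_prod, ← Measure.prod_restrict, lintegral_prod_symm]
  · refine lintegral_congr fun θ ↦ lintegral_congr fun ρ ↦ ?_
    simp only [smul_eq_mul, polarCoord_symm_apply]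
    rw [← lintegral_const_mul' _ _ ENNReal.ofReal_ne_top]
    simp only [heightPlaneEquiv_symm_apply]
  · exact ((ENNReal.measurable_ofReal.comp measurable_fst).smul
      (hmeas.lintegral_prod_left'.comp hpolar)).aemeasurable

lemma hasDerivAt_mul_div_sqrt_one_sub_sq (ρ : ℝ) {s : ℝ} (hs : s ∈ Ioo (-1 : ℝ) 1) :
    HasDerivAt (fun s ↦ ρ * (s / √(1 - s ^ 2))) (ρ / √(1 - s ^ 2) ^ 3) s := by
  have hw := sqrt_one_sub_sq_pos hs
  have hw2 := sq_sqrt_one_sub_sq hs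
  refine (((hasDerivAt_id s).div (hasDerivAt_sqrt_one_sub_sq hs) hw.ne').const_mul
    ρ).congr_deriv ?_
  simp only [id]
  field_simp
  rw [hw2]
  ring

lemma bijOn_mul_div_sqrt_one_sub_sq {ρ : ℝ} (hρ : ρ ≠ 0) :
    BijOn (fun s ↦ ρ * (s / √(1 - s ^ 2))) (Ioo (-1) 1) univ := by
  have hball : BijOn (fun s : ℝ ↦ s / √(1 - s ^ 2)) (Ioo (-1) 1) univ := by
    have hsource : Ioo (-1) 1 = (OpenPartialHomeomorph.univUnitBall (E := ℝ)).symm.source := by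
      change _ = ball (0 : ℝ) 1
      rw [Real.ball_eq_Ioo, zero_sub, zero_add]
    rw [hsource]
    refine (OpenPartialHomeomorph.univUnitBall (E := ℝ)).symm.bijOn.congr fun s _ ↦ ?_
    rw [OpenPartialHomeomorph.univUnitBall_symm_apply, Real.norm_eq_abs, sq_abs, smul_eq_mul,
      div_eq_inv_mul]
  exact (bijOn_univ.2 (mulLeft_bijective₀ ρ hρ)).comp hball

lemma lintegral_eq_lintegral_Ioo_mul_div_sqrt_one_sub_sq {ρ : ℝ} (hρ : 0 < ρ) (h : ℝ → ℝ≥0∞) :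
    ∫⁻ z, h z = ∫⁻ s in Ioo (-1 : ℝ) 1,
      ENNReal.ofReal (ρ / √(1 - s ^ 2) ^ 3) * h (ρ * (s / √(1 - s ^ 2))) := by
  have hbij := bijOn_mul_div_sqrt_one_sub_sq hρ.ne'
  have hchange := lintegral_image_eq_lintegral_abs_deriv_mul measurableSet_Ioo
    (fun s hs ↦ (hasDerivAt_mul_div_sqrt_one_sub_sq ρ hs).hasDerivWithinAt) hbij.injOn h
  rw [hbij.image_eq, Measure.restrict_univ] at hchange
  rw [hchange]
  refine setLIntegral_congr_fun measurableSet_Ioo fun s hs ↦ ?_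
  have hw := sqrt_one_sub_sq_pos hs
  rw [abs_of_pos (by positivity)]

/-- The Jacobian of `(θ, ρ, s) ↦ (ρ / √(1 - s²)) • cylToSphere θ s`, cut off to the unit ball. -/
def radialDensity (ρ s : ℝ) : ℝ≥0∞ :=
  (Iio √(1 - s ^ 2)).indicator (fun ρ ↦ ENNReal.ofReal (ρ ^ 2 / √(1 - s ^ 2) ^ 3)) ρ

lemma measurable_radialDensity : Measurable (Function.uncurry radialDensity) := by
  have hset : MeasurableSet {p : ℝ × ℝ | p.1 < √(1 - p.2 ^ 2)} :=
    measurableSet_lt (by fun_prop) (by fun_prop)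
  refine Measurable.indicator (f := fun p : ℝ × ℝ ↦
    ENNReal.ofReal (p.1 ^ 2 / √(1 - p.2 ^ 2) ^ 3)) (by fun_prop) hset

lemma lintegral_radialDensity {s : ℝ} (hs : s ∈ Ioo (-1 : ℝ) 1) :
    ∫⁻ ρ in Ioi (0 : ℝ), radialDensity ρ s = ENNReal.ofReal (1 / 3) := by
  have hw := sqrt_one_sub_sq_pos hs
  unfold radialDensity
  rw [lintegral_indicator measurableSet_Iio, Measure.restrict_restrict measurableSet_Iio,
    Iio_inter_Ioi, restrict_Ioo_eq_restrict_Ioc, ← ofReal_integral_eq_lintegral_ofReal,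
    ← intervalIntegral.integral_of_le hw.le, intervalIntegral.integral_div, integral_pow]
  · congr 1
    norm_num
    field_simp
  · exact ((continuous_pow 2).div_const _).integrableOn_Ioc
  · exact Eventually.of_forall fun x ↦ by positivity

lemma cylindrical_eq_smul_cylToSphere (ρ θ : ℝ) {s : ℝ} (hs : s ∈ Ioo (-1 : ℝ) 1) :
    !₂[ρ * Real.cos θ, ρ * Real.sin θ, ρ * (s / √(1 - s ^ 2))] =
      (ρ / √(1 - s ^ 2)) • cylToSphere θ s := by
  have hw := sqrt_one_sub_sq_pos hs
  ext i
  fin_cases i <;> simp [cylToSphere] <;> field_simp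

lemma jacobian_mul_indicator_ball (F : Rn 3 → ℝ≥0∞) {ρ : ℝ} (hρ : 0 < ρ) (θ : ℝ) {s : ℝ}
    (hs : s ∈ Ioo (-1 : ℝ) 1) :
    ENNReal.ofReal (ρ / √(1 - s ^ 2) ^ 3) * (ENNReal.ofReal ρ *
      (ball (0 : Rn 3) 1).indicator (fun x ↦ F (NormedSpace.normalize x))
        !₂[ρ * Real.cos θ, ρ * Real.sin θ, ρ * (s / √(1 - s ^ 2))]) =
      radialDensity ρ s * F (cylToSphere θ s) := by
  have hw := sqrt_one_sub_sq_pos hs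
  have hnorm : ‖(ρ / √(1 - s ^ 2)) • cylToSphere θ s‖ = ρ / √(1 - s ^ 2) := by
    rw [norm_smul, norm_cylToSphere θ hs, mul_one, Real.norm_of_nonneg (by positivity)]
  have hball : (ρ / √(1 - s ^ 2)) • cylToSphere θ s ∈ ball (0 : Rn 3) 1 ↔ ρ ∈ Iio √(1 - s ^ 2) := by
    rw [mem_ball_zero_iff, hnorm, div_lt_one hw, mem_Iio]
  rw [cylindrical_eq_smul_cylToSphere ρ θ hs, radialDensity]
  by_cases hlt : ρ ∈ Iio √(1 - s ^ 2)
  · rw [indicator_of_mem (hball.2 hlt), indicator_of_mem hlt,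
      NormedSpace.normalize_smul_of_pos (by positivity),
      NormedSpace.normalize_eq_self_of_norm_eq_one (norm_cylToSphere θ hs), ← mul_assoc,
      ← ENNReal.ofReal_mul (by positivity), div_mul_eq_mul_div, ← sq ρ]
  · rw [indicator_of_notMem (hball.not.2 hlt), indicator_of_notMem hlt, mul_zero, mul_zero,
      zero_mul]

lemma lintegral_coneMeasure {F : Rn 3 → ℝ≥0∞} (hF : Measurable F) :
    ∫⁻ x, F x ∂coneMeasure (Rn 3) = ENNReal.ofReal (1 / 3) *
      ∫⁻ θ in Ioo (-Real.pi) Real.pi, ∫⁻ s in Ioo (-1 : ℝ) 1, F (cylToSphere θ s) := by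
  rw [coneMeasure, lintegral_map hF measurable_normalize, ← lintegral_indicator measurableSet_ball,
    lintegral_eq_lintegral_cylindrical (Measurable.indicator
      (f := fun x ↦ F (NormedSpace.normalize x)) (hF.comp measurable_normalize) measurableSet_ball),
    ← lintegral_const_mul' _ _ ENNReal.ofReal_ne_top]
  refine lintegral_congr fun θ ↦ ?_
  have hF' : Measurable fun s ↦ F (cylToSphere θ s) :=
    hF.comp (continuous_cylToSphere.measurable.comp measurable_prodMk_left)
  calc ∫⁻ ρ in Ioi (0 : ℝ), ∫⁻ z : ℝ, ENNReal.ofReal ρ *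
        (ball (0 : Rn 3) 1).indicator (fun x ↦ F (NormedSpace.normalize x))
          !₂[ρ * Real.cos θ, ρ * Real.sin θ, z]
      = ∫⁻ ρ in Ioi (0 : ℝ), ∫⁻ s in Ioo (-1 : ℝ) 1, radialDensity ρ s * F (cylToSphere θ s) := by
        refine setLIntegral_congr_fun measurableSet_Ioi fun ρ hρ ↦ ?_
        rw [lintegral_eq_lintegral_Ioo_mul_div_sqrt_one_sub_sq hρ]
        exact setLIntegral_congr_fun measurableSet_Ioo fun s hs ↦
          jacobian_mul_indicator_ball F hρ θ hs
    _ = ∫⁻ s in Ioo (-1 : ℝ) 1, ∫⁻ ρ in Ioi (0 : ℝ), radialDensity ρ s * F (cylToSphere θ s) :=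
        lintegral_lintegral_swap
          (measurable_radialDensity.mul (hF'.comp measurable_snd)).aemeasurable
    _ = ∫⁻ s in Ioo (-1 : ℝ) 1, ENNReal.ofReal (1 / 3) * F (cylToSphere θ s) := by
        refine setLIntegral_congr_fun measurableSet_Ioo fun s hs ↦ ?_
        rw [lintegral_mul_const _ measurable_radialDensity.of_uncurry_right,
          lintegral_radialDensity hs]
    _ = ENNReal.ofReal (1 / 3) * ∫⁻ s in Ioo (-1 : ℝ) 1, F (cylToSphere θ s) :=
        lintegral_const_mul' _ _ ENNReal.ofReal_ne_top

theorem coneMeasure_eq_smul_map_cylToSphere :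
    coneMeasure (Rn 3) = ENNReal.ofReal (1 / 3) •
      (cylinderMeasure (Ioo (-Real.pi) Real.pi)).map fun p ↦ cylToSphere p.1 p.2 := by
  have hΦ := continuous_cylToSphere.measurable
  refine Measure.ext fun A hA ↦ ?_
  have hA1 : Measurable (A.indicator (1 : Rn 3 → ℝ≥0∞)) := measurable_one.indicator hA
  rw [← lintegral_indicator_one hA, lintegral_coneMeasure hA1, Measure.smul_apply, smul_eq_mul,
    ← lintegral_indicator_one hA, lintegral_map hA1 hΦ, cylinderMeasure,
    lintegral_prod (fun p : ℝ × ℝ ↦ A.indicator 1 (cylToSphere p.1 p.2))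
      (hA1.comp hΦ).aemeasurable]

end CylindricalCoordinates

/-! ### Homogeneous functions on cones over the sphere -/

section Cones

variable {K U : Set (Rn 3)}

lemma subset_coneOver : U ⊆ coneOver U := fun y hy ↦ ⟨1, one_pos, y, hy, (one_smul ℝ y).symm⟩

lemma smul_mem_coneOver {t : ℝ} (ht : 0 < t) {y : Rn 3} (hy : y ∈ coneOver U) :
    t • y ∈ coneOver U := by
  obtain ⟨r, hr, z, hz, rfl⟩ := hy
  exact ⟨t * r, by positivity, z, hz, (mul_smul t r z).symm⟩

lemma smul_mem_coneOver_iff {t : ℝ} (ht : 0 < t) {y : Rn 3} :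
    t • y ∈ coneOver U ↔ y ∈ coneOver U :=
  ⟨fun h ↦ inv_smul_smul₀ ht.ne' y ▸ smul_mem_coneOver (inv_pos.2 ht) h, smul_mem_coneOver ht⟩

lemma mem_coneOver_S2_diff_iff {x : Rn 3} :
    x ∈ coneOver (S2 \ K) ↔ x ≠ 0 ∧ NormedSpace.normalize x ∉ K := by
  constructor
  · rintro ⟨t, ht, y, ⟨hy, hyK⟩, rfl⟩
    have hnorm := norm_eq_one_of_mem_S2 hy
    refine ⟨smul_ne_zero ht.ne' (norm_ne_zero_iff.1 (hnorm ▸ one_ne_zero)), ?_⟩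
    rwa [NormedSpace.normalize_smul_of_pos ht,
      NormedSpace.normalize_eq_self_of_norm_eq_one hnorm]
  · rintro ⟨hx, hxK⟩
    exact ⟨‖x‖, norm_pos_iff.2 hx, NormedSpace.normalize x,
      ⟨mem_sphere_zero_iff_norm.2 (NormedSpace.norm_normalize_eq_one_iff.2 hx), hxK⟩,
      (NormedSpace.norm_smul_normalize x).symm⟩

lemma isOpen_coneOver_S2_diff (hK : IsClosed K) : IsOpen (coneOver (S2 \ K)) := by
  have hcont : ContinuousOn NormedSpace.normalize {(0 : Rn 3)}ᶜ :=
    (continuous_norm.continuousOn.inv₀ fun x hx ↦ norm_ne_zero_iff.2 hx).smul continuousOn_id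
  convert hcont.isOpen_inter_preimage isOpen_compl_singleton hK.isOpen_compl using 1
  ext x
  exact mem_coneOver_S2_diff_iff

lemma locallyLipschitzOn_of_locLipOn {N : ℕ} {u : Rn N → ℝ} {s : Set (Rn N)}
    (h : LocLipOn N u s) : LocallyLipschitzOn s u := fun x hx ↦
  let ⟨t, ht, C, hC⟩ := h x hx
  ⟨C, t, ht, hC⟩

end Cones

section HomogeneousFunctions

variable {E F : Type*} [NormedAddCommGroup E] [NormedAddCommGroup F] [NormedSpace ℝ F]
  [FiniteDimensional ℝ F] [MeasurableSpace E] [BorelSpace E] {U : Set E} {g : E → F}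

lemma ae_differentiableAt_of_locallyLipschitzOn [NormedSpace ℝ E] [FiniteDimensional ℝ E]
    {μ : Measure E} [μ.IsAddHaarMeasure] (hU : IsOpen U) (hg : LocallyLipschitzOn U g) :
    ∀ᵐ x ∂μ, x ∈ U → DifferentiableAt ℝ g x := by
  rw [ae_iff]
  refine measure_null_of_locally_null _ fun x hx ↦ ?_
  obtain ⟨hxU, -⟩ := Classical.not_imp.1 hx
  obtain ⟨C, t, ht, hLip⟩ := hg hxU
  rw [hU.nhdsWithin_eq hxU] at ht
  have hdiff := (hLip.mono interior_subset).ae_differentiableWithinAt (μ := μ)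
    isOpen_interior.measurableSet
  rw [ae_restrict_iff' isOpen_interior.measurableSet, ae_iff] at hdiff
  refine ⟨_, ?_, hdiff⟩
  filter_upwards [nhdsWithin_le_nhds (interior_mem_nhds.2 ht), self_mem_nhdsWithin] with y hy hyU
  exact Classical.not_imp.2 ⟨hy, fun hd ↦ (Classical.not_imp.1 hyU).2
    (hd.differentiableAt (isOpen_interior.mem_nhds hy))⟩

lemma ae_coneMeasure_differentiableAt [InnerProductSpace ℝ E] [FiniteDimensional ℝ E]
    [Nontrivial E] (hU : IsOpen U) (hcone : ∀ x ∈ U, ∀ t : ℝ, 0 < t → t • x ∈ U)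
    (hg : LocallyLipschitzOn U g) (hhom : ∀ (x : E) (t : ℝ), 0 < t → g (t • x) = g x) :
    ∀ᵐ x ∂coneMeasure E, x ∈ U → DifferentiableAt ℝ g x := by
  have hmeas : MeasurableSet {x | x ∈ U → DifferentiableAt ℝ g x} := by
    simp only [imp_iff_not_or]
    exact hU.measurableSet.compl.union (measurableSet_of_differentiableAt ℝ g)
  rw [ae_coneMeasure_iff hmeas]
  filter_upwards [ae_restrict_of_ae (ae_differentiableAt_of_locallyLipschitzOn hU hg)]
    with x hdiff hx hxU
  have hnorm : 0 < ‖x‖ := norm_pos_iff.2 hx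
  have hself : ‖x‖ • NormedSpace.normalize x = x := NormedSpace.norm_smul_normalize x
  have hgx : DifferentiableAt ℝ g (‖x‖ • NormedSpace.normalize x) :=
    hself.symm ▸ hdiff (hself ▸ hcone _ hxU _ hnorm)
  exact (hgx.comp (f := fun y ↦ ‖x‖ • y) _ (by fun_prop)).congr_of_eventuallyEq
    (Eventually.of_forall fun y ↦ (hhom y _ hnorm).symm)

end HomogeneousFunctions

/-! ### Energy in cylindrical coordinates -/

section Energy

variable {g : Rn 3 → ℝ} {U : Set (Rn 3)} {α β θ s : ℝ}

lemma cylToSphere_mem_S2 (θ : ℝ) (hs : s ∈ Ioo (-1 : ℝ) 1) : cylToSphere θ s ∈ S2 :=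
  mem_sphere_zero_iff_norm.2 (norm_cylToSphere θ hs)

lemma cylToSphere_notMem_halfCircle (hθ : θ ∈ Ioo (-Real.pi) Real.pi) (hs : s ∈ Ioo (-1 : ℝ) 1) :
    cylToSphere θ s ∉ halfCircle := by
  rintro ⟨φ, hφ, h0, h1, -⟩
  have hw := sqrt_one_sub_sq_pos hs
  have hcos := Real.cos_nonneg_of_mem_Icc hφ
  change √(1 - s ^ 2) * Real.cos θ = -Real.cos φ at h0
  change √(1 - s ^ 2) * Real.sin θ = 0 at h1
  have hsin : Real.sin θ = 0 := (mul_eq_zero.1 h1).resolve_left hw.ne'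
  rw [(Real.sin_eq_zero_iff_of_lt_of_lt hθ.1 hθ.2).1 hsin, Real.cos_zero] at h0
  linarith

lemma cylToSphere_two_pi_sub (θ s : ℝ) : cylToSphere (2 * Real.pi - θ) s = cylToSphere (-θ) s := by
  simp only [cylToSphere, Real.cos_two_pi_sub, Real.sin_two_pi_sub, Real.cos_neg, Real.sin_neg]

/-- The tangent vector `∂/∂θ` to the sphere in cylindrical coordinates. -/
def longitudeVector (θ s : ℝ) : Rn 3 :=
  !₂[-(√(1 - s ^ 2) * Real.sin θ), √(1 - s ^ 2) * Real.cos θ, 0]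

/-- The tangent vector `∂/∂s` to the sphere in cylindrical coordinates. -/
def heightVector (θ s : ℝ) : Rn 3 :=
  !₂[-(s / √(1 - s ^ 2)) * Real.cos θ, -(s / √(1 - s ^ 2)) * Real.sin θ, 1]

lemma measurable_longitudeVector : Measurable fun p : ℝ × ℝ ↦ longitudeVector p.1 p.2 := by
  refine (WithLp.measurable_toLp 2 _).comp (measurable_pi_lambda _ fun i ↦ ?_)
  fin_cases i <;> dsimp <;> fun_prop

lemma measurable_heightVector : Measurable fun p : ℝ × ℝ ↦ heightVector p.1 p.2 := by
  refine (WithLp.measurable_toLp 2 _).comp (measurable_pi_lambda _ fun i ↦ ?_)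
  fin_cases i <;> dsimp <;> fun_prop

lemma hasDerivAt_toLp {n : ℕ} {f : ℝ → Fin n → ℝ} {f' : Fin n → ℝ} {x : ℝ}
    (hf : HasDerivAt f f' x) : HasDerivAt (fun t ↦ WithLp.toLp 2 (f t)) (WithLp.toLp 2 f') x :=
  (PiLp.continuousLinearEquiv 2 ℝ fun _ : Fin n ↦ ℝ).symm.hasFDerivAt.comp_hasDerivAt x hf

lemma hasDerivAt_cylToSphere_longitude (θ s : ℝ) :
    HasDerivAt (fun θ ↦ cylToSphere θ s) (longitudeVector θ s) θ := by
  refine hasDerivAt_toLp (hasDerivAt_pi.2 fun i ↦ ?_)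
  fin_cases i
  · simpa using (Real.hasDerivAt_cos θ).const_mul √(1 - s ^ 2)
  · simpa using (Real.hasDerivAt_sin θ).const_mul √(1 - s ^ 2)
  · simpa using hasDerivAt_const θ s

lemma hasDerivAt_cylToSphere_height (θ : ℝ) (hs : s ∈ Ioo (-1 : ℝ) 1) :
    HasDerivAt (cylToSphere θ) (heightVector θ s) s := by
  refine hasDerivAt_toLp (hasDerivAt_pi.2 fun i ↦ ?_)
  fin_cases i
  · exact (hasDerivAt_sqrt_one_sub_sq hs).mul_const (Real.cos θ)
  · exact (hasDerivAt_sqrt_one_sub_sq hs).mul_const (Real.sin θ)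
  · exact hasDerivAt_id s

lemma locallyLipschitzOn_cylToSphere_longitude (S : Set ℝ) (s : ℝ) :
    LocallyLipschitzOn S fun θ ↦ cylToSphere θ s := by
  refine (locallyLipschitzOn_of_hasDerivAt isOpen_univ
    (fun θ _ ↦ hasDerivAt_cylToSphere_longitude θ s) ?_).mono (subset_univ S)
  refine ((PiLp.continuous_toLp 2 _).comp (continuous_pi fun i ↦ ?_)).continuousOn
  fin_cases i <;> dsimp <;> fun_prop

lemma locallyLipschitzOn_cylToSphere_height (θ : ℝ) :
    LocallyLipschitzOn (Ioo (-1) 1) (cylToSphere θ) := by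
  refine locallyLipschitzOn_of_hasDerivAt isOpen_Ioo
    (fun s hs ↦ hasDerivAt_cylToSphere_height θ hs) ?_
  have hquot : ContinuousOn (fun s : ℝ ↦ -(s / √(1 - s ^ 2))) (Ioo (-1) 1) :=
    (continuousOn_id.div (by fun_prop) fun s hs ↦ (sqrt_one_sub_sq_pos hs).ne').neg
  refine (PiLp.continuous_toLp 2 _).comp_continuousOn (continuousOn_pi.2 fun i ↦ ?_)
  fin_cases i
  · exact hquot.mul continuousOn_const
  · exact hquot.mul continuousOn_const
  · exact continuousOn_const

lemma inner_longitudeVector (v : Rn 3) (θ s : ℝ) :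
    inner ℝ v (longitudeVector θ s) =
      √(1 - s ^ 2) * (v 1 * Real.cos θ - v 0 * Real.sin θ) := by
  simp only [longitudeVector, PiLp.inner_apply, Fin.sum_univ_three, Matrix.cons_val_zero,
    RCLike.inner_apply, Real.ringHom_apply, Matrix.cons_val_one, Matrix.cons_val]
  ring

lemma sqrt_mul_inner_heightVector (v : Rn 3) (θ : ℝ) (hs : s ∈ Ioo (-1 : ℝ) 1) :
    √(1 - s ^ 2) * inner ℝ v (heightVector θ s) =
      √(1 - s ^ 2) * v 2 - s * (v 0 * Real.cos θ + v 1 * Real.sin θ) := by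
  have hw := sqrt_one_sub_sq_pos hs
  simp only [heightVector, PiLp.inner_apply, Fin.sum_univ_three, Matrix.cons_val_zero,
    RCLike.inner_apply, Real.ringHom_apply, Matrix.cons_val_one, Matrix.cons_val]
  field_simp
  ring

lemma cylindrical_normSq_le (v : Rn 3) (θ : ℝ) (hs : s ∈ Ioo (-1 : ℝ) 1) :
    (1 - s ^ 2) * inner ℝ v (heightVector θ s) ^ 2 +
      inner ℝ v (longitudeVector θ s) ^ 2 / (1 - s ^ 2) ≤ ‖v‖ ^ 2 := by
  have hw := sqrt_one_sub_sq_pos hs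
  have hw2 := sq_sqrt_one_sub_sq hs
  rw [← hw2, ← mul_pow, sqrt_mul_inner_heightVector v θ hs, inner_longitudeVector, mul_pow,
    mul_div_cancel_left₀ _ (by positivity), norm_sq_eq_add_add]
  -- The difference of the two sides is the square of the normal component of `v`.
  have hnormal : v 0 ^ 2 + v 1 ^ 2 + v 2 ^ 2 -
      ((√(1 - s ^ 2) * v 2 - s * (v 0 * Real.cos θ + v 1 * Real.sin θ)) ^ 2 +
        (v 1 * Real.cos θ - v 0 * Real.sin θ) ^ 2) =
      (√(1 - s ^ 2) * (v 0 * Real.cos θ + v 1 * Real.sin θ) + s * v 2) ^ 2 := by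
    linear_combination (-(v 0 * Real.cos θ + v 1 * Real.sin θ) ^ 2 - v 2 ^ 2) * hw2 -
      (v 0 ^ 2 + v 1 ^ 2) * Real.sin_sq_add_cos_sq θ
  exact sub_nonneg.1 (hnormal ▸ sq_nonneg _)

lemma cylinderEnergy_inner_le (I : Set ℝ) (v : ℝ → ℝ → Rn 3) :
    cylinderEnergy I (fun θ s ↦ inner ℝ (v θ s) (longitudeVector θ s))
        (fun θ s ↦ inner ℝ (v θ s) (heightVector θ s)) ≤
      ∫⁻ p, ENNReal.ofReal (‖v p.1 p.2‖ ^ 2) ∂cylinderMeasure I := by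
  refine lintegral_mono_ae ?_
  filter_upwards [ae_snd_mem_Ioo_cylinderMeasure I] with p hp
  exact ENNReal.ofReal_le_ofReal (cylindrical_normSq_le _ _ hp)

lemma measurable_gradient {E : Type*} [NormedAddCommGroup E] [InnerProductSpace ℝ E]
    [CompleteSpace E] [MeasurableSpace E] [BorelSpace E] (f : E → ℝ) :
    Measurable (gradient f) :=
  (InnerProductSpace.toDual ℝ E).symm.continuous.measurable.comp (measurable_fderiv ℝ f)

lemma ae_mem_cylinderMeasure_pi :
    ∀ᵐ p ∂cylinderMeasure (Ioo (-Real.pi) Real.pi),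
      p.1 ∈ Ioo (-Real.pi) Real.pi ∧ p.2 ∈ Ioo (-1 : ℝ) 1 := by
  rw [cylinderMeasure, Measure.prod_restrict]
  exact ae_restrict_mem (measurableSet_Ioo.prod measurableSet_Ioo)

lemma ae_cylinderMeasure_of_ae_coneMeasure {P : Rn 3 → Prop}
    (hP : ∀ᵐ x ∂coneMeasure (Rn 3), P x) :
    ∀ᵐ p ∂cylinderMeasure (Ioo (-Real.pi) Real.pi), P (cylToSphere p.1 p.2) := by
  rw [coneMeasure_eq_smul_map_cylToSphere, Measure.ae_ennreal_smul_measure_iff (by simp)] at hP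
  exact ae_of_ae_map continuous_cylToSphere.measurable.aemeasurable hP

lemma hasCylinderPartials_comp_cylToSphere (hU : IsOpen U)
    (hcone : ∀ x ∈ U, ∀ t : ℝ, 0 < t → t • x ∈ U)
    (hmaps : ∀ θ ∈ Ioo (-Real.pi) Real.pi, ∀ s ∈ Ioo (-1 : ℝ) 1, cylToSphere θ s ∈ U)
    (hmeas : Measurable g) (hg : LocallyLipschitzOn U g)
    (hhom : ∀ (x : Rn 3) (t : ℝ), 0 < t → g (t • x) = g x) :
    HasCylinderPartials (Ioo (-Real.pi) Real.pi) (fun θ s ↦ g (cylToSphere θ s))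
      (fun θ s ↦ inner ℝ (gradient g (cylToSphere θ s)) (longitudeVector θ s))
      (fun θ s ↦ inner ℝ (gradient g (cylToSphere θ s)) (heightVector θ s)) := by
  have hΦ := continuous_cylToSphere.measurable
  have hgrad := (measurable_gradient g).comp hΦ
  have hdiff : ∀ᵐ p ∂cylinderMeasure (Ioo (-Real.pi) Real.pi), p.2 ∈ Ioo (-1 : ℝ) 1 ∧
      HasFDerivAt g (fderiv ℝ g (cylToSphere p.1 p.2)) (cylToSphere p.1 p.2) := by
    filter_upwards [ae_mem_cylinderMeasure_pi, ae_cylinderMeasure_of_ae_coneMeasure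
      (ae_coneMeasure_differentiableAt hU hcone hg hhom)] with p hp hd
    exact ⟨hp.2, (hd (hmaps _ hp.1 _ hp.2)).hasFDerivAt⟩
  refine ⟨hmeas.comp hΦ, ?_, ?_, fun s hs ↦ ?_, fun θ hθ ↦ ?_, ?_, ?_⟩
  · exact hgrad.inner (𝕜 := ℝ) measurable_longitudeVector
  · exact hgrad.inner (𝕜 := ℝ) measurable_heightVector
  · exact locallyLipschitzOn_comp hg (locallyLipschitzOn_cylToSphere_longitude _ s)
      fun θ hθ ↦ hmaps θ hθ s hs
  · exact locallyLipschitzOn_comp hg (locallyLipschitzOn_cylToSphere_height θ) (hmaps θ hθ)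
  · filter_upwards [hdiff] with p hp
    rw [inner_gradient_left]
    exact hp.2.comp_hasDerivAt (f := fun θ ↦ cylToSphere θ p.2) p.1
      (hasDerivAt_cylToSphere_longitude p.1 p.2)
  · filter_upwards [hdiff] with p hp
    rw [inner_gradient_left]
    exact hp.2.comp_hasDerivAt p.2 (hasDerivAt_cylToSphere_height p.1 hp.1)

lemma eventually_abs_sub_comp_cylToSphere_neg_le (hU : IsOpen U) (hg : LocallyLipschitzOn U g)
    (hs : cylToSphere Real.pi s ∈ U) :
    ∃ C, ∀ᶠ θ in 𝓝[<] Real.pi,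
      |g (cylToSphere θ s) - g (cylToSphere (-θ) s)| ≤ C * (Real.pi - θ) := by
  have hcont : Continuous fun θ ↦ cylToSphere θ s :=
    continuous_cylToSphere.comp (Continuous.prodMk_left s)
  obtain ⟨C, hC⟩ := exists_eventually_abs_sub_le_of_locallyLipschitzOn
    (locallyLipschitzOn_comp hg (locallyLipschitzOn_cylToSphere_longitude _ s)
      (mapsTo_preimage (fun θ ↦ cylToSphere θ s) U)) ((hU.preimage hcont).mem_nhds hs)
  have hreflect : ∀ᶠ θ in 𝓝 Real.pi, |g (cylToSphere (-θ) s) - g (cylToSphere Real.pi s)| ≤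
      C * |2 * Real.pi - θ - Real.pi| := by
    have htendsto : Tendsto (fun θ ↦ 2 * Real.pi - θ) (𝓝 Real.pi) (𝓝 Real.pi) :=
      (continuous_sub_left (2 * Real.pi)).tendsto' _ _ (by ring)
    simpa only [cylToSphere_two_pi_sub] using htendsto.eventually hC
  refine ⟨2 * C, ?_⟩
  filter_upwards [hC.filter_mono nhdsWithin_le_nhds, hreflect.filter_mono nhdsWithin_le_nhds,
    self_mem_nhdsWithin] with θ hθ hnegθ hlt
  have hpos : 0 < Real.pi - θ := sub_pos.2 hlt
  rw [abs_sub_comm θ, abs_of_pos hpos] at hθ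
  rw [show 2 * Real.pi - θ - Real.pi = Real.pi - θ by ring, abs_of_pos hpos] at hnegθ
  calc |g (cylToSphere θ s) - g (cylToSphere (-θ) s)|
      ≤ |g (cylToSphere θ s) - g (cylToSphere Real.pi s)| +
        |g (cylToSphere Real.pi s) - g (cylToSphere (-θ) s)| := abs_sub_le _ _ _
    _ ≤ 2 * C * (Real.pi - θ) := by rw [abs_sub_comm (g (cylToSphere Real.pi s))]; linarith

end Energy

/-! ### Lower bound for the first eigenvalue -/

section Rigidity

variable {K : Set (Rn 3)} {g : Rn 3 → ℝ} {α β c : ℝ}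

lemma cylToSphere_mem_S2_diff (hK : K ⊆ halfCircle) {θ s : ℝ}
    (hθ : θ ∈ Ioo (-Real.pi) Real.pi) (hs : s ∈ Ioo (-1 : ℝ) 1) : cylToSphere θ s ∈ S2 \ K :=
  ⟨cylToSphere_mem_S2 θ hs, fun h ↦ cylToSphere_notMem_halfCircle hθ hs (hK h)⟩

lemma ofReal_mul_lintegral_sq_comp_cylToSphere_le (hα : -1 ≤ α) (hβ : β ≤ 1)
    (hc : IsLegendreGapBound α β c) (hc1 : c ≤ 1) (hKc : IsClosed K) (hK : K ⊆ halfCircle)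
    (hgap : ∀ s ∈ Ioo α β, cylToSphere Real.pi s ∉ K) (hmeas : Measurable g)
    (hg : LocallyLipschitzOn (coneOver (S2 \ K)) g)
    (hhom : ∀ (x : Rn 3) (t : ℝ), 0 < t → g (t • x) = g x)
    (hfin : ∫⁻ p, ENNReal.ofReal (g (cylToSphere p.1 p.2) ^ 2)
      ∂cylinderMeasure (Ioo (-Real.pi) Real.pi) ≠ ⊤)
    (hmean : ∫ p, g (cylToSphere p.1 p.2) ∂cylinderMeasure (Ioo (-Real.pi) Real.pi) = 0) :
    ENNReal.ofReal c * ∫⁻ p, ENNReal.ofReal (g (cylToSphere p.1 p.2) ^ 2)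
        ∂cylinderMeasure (Ioo (-Real.pi) Real.pi) ≤
      ∫⁻ p, ENNReal.ofReal (‖gradient g (cylToSphere p.1 p.2)‖ ^ 2)
        ∂cylinderMeasure (Ioo (-Real.pi) Real.pi) := by
  have hU := isOpen_coneOver_S2_diff hKc
  have hpartials := hasCylinderPartials_comp_cylToSphere hU
    (fun x hx t ht ↦ smul_mem_coneOver ht hx)
    (fun θ hθ s hs ↦ subset_coneOver (cylToSphere_mem_S2_diff hK hθ hs)) hmeas hg hhom
  refine (ofReal_mul_lintegral_sq_le_cylinderEnergy_of_gap hc hc1 hpartials (fun s hs ↦ ?_)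
    hfin hmean).trans (cylinderEnergy_inner_le _ fun θ s ↦ gradient g (cylToSphere θ s))
  exact eventually_abs_sub_comp_cylToSphere_neg_le hU hg (subset_coneOver
    ⟨cylToSphere_mem_S2 _ (Ioo_subset_Ioo hα hβ hs), hgap s hs⟩)

lemma exists_hausdorffMeasure_restrict_S2_eq_smul_map (h0 : μH[(2 : ℝ)].restrict S2 ≠ 0) :
    ∃ d : ℝ≥0∞, d ≠ 0 ∧ d ≠ ⊤ ∧ μH[(2 : ℝ)].restrict S2 =
      d • (cylinderMeasure (Ioo (-Real.pi) Real.pi)).map fun p ↦ cylToSphere p.1 p.2 := by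
  obtain ⟨c, hc0, hctop, hc⟩ := exists_hausdorffMeasure_restrict_S2_eq_smul h0
  refine ⟨c * ENNReal.ofReal (1 / 3), mul_ne_zero hc0 (by simp),
    ENNReal.mul_ne_top hctop ENNReal.ofReal_ne_top, ?_⟩
  rw [hc, coneMeasure_eq_smul_map_cylToSphere, smul_smul]

lemma ofReal_mul_lintegral_sq_le_lintegral_gradient_of_measurable (hα : -1 ≤ α) (hβ : β ≤ 1)
    (hc : IsLegendreGapBound α β c) (hc1 : c ≤ 1) (hKc : IsClosed K) (hK : K ⊆ halfCircle)
    (hgap : ∀ s ∈ Ioo α β, cylToSphere Real.pi s ∉ K) (hmeas : Measurable g)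
    (hg : LocallyLipschitzOn (coneOver (S2 \ K)) g)
    (hhom : ∀ (x : Rn 3) (t : ℝ), 0 < t → g (t • x) = g x)
    (hfin : ∫⁻ y in S2, ENNReal.ofReal (g y ^ 2) ∂μH[(2 : ℝ)] ≠ ⊤)
    (hmean : ∫ y in S2, g y ∂μH[(2 : ℝ)] = 0) :
    ENNReal.ofReal c * ∫⁻ y in S2, ENNReal.ofReal (g y ^ 2) ∂μH[(2 : ℝ)] ≤
      ∫⁻ y in S2, ENNReal.ofReal (‖gradient g y‖ ^ 2) ∂μH[(2 : ℝ)] := by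
  rcases eq_or_ne (μH[(2 : ℝ)].restrict S2) 0 with h0 | h0
  · simp only [h0, lintegral_zero_measure, mul_zero, le_refl]
  obtain ⟨d, hd0, hdtop, hd⟩ := exists_hausdorffMeasure_restrict_S2_eq_smul_map h0
  have hΦ := continuous_cylToSphere.measurable
  rw [hd, integral_smul_measure, integral_map hΦ.aemeasurable hmeas.aestronglyMeasurable,
    smul_eq_zero_iff_right (ENNReal.toReal_ne_zero.2 ⟨hd0, hdtop⟩)] at hmean
  rw [hd, lintegral_smul_measure, lintegral_map (hmeas.pow_const 2).ennreal_ofReal hΦ] at hfin ⊢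
  rw [lintegral_smul_measure,
    lintegral_map ((measurable_gradient g).norm.pow_const 2).ennreal_ofReal hΦ, smul_eq_mul,
    smul_eq_mul, mul_left_comm, ENNReal.mul_le_mul_iff_right hd0 hdtop]
  exact ofReal_mul_lintegral_sq_comp_cylToSphere_le hα hβ hc hc1 hKc hK hgap hmeas hg hhom
    (fun htop ↦ hfin (by rw [htop, smul_eq_mul, ENNReal.mul_top hd0])) hmean

lemma ae_mem_S2_diff (hKc : IsClosed K) (hK : K ⊆ halfCircle) :
    ∀ᵐ x ∂μH[(2 : ℝ)].restrict S2, x ∈ S2 \ K := by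
  rcases eq_or_ne (μH[(2 : ℝ)].restrict S2) 0 with h0 | h0
  · simp only [h0, ae_zero, eventually_bot]
  obtain ⟨d, -, -, hd⟩ := exists_hausdorffMeasure_restrict_S2_eq_smul_map h0
  rw [hd]
  refine Measure.ae_smul_measure ((ae_map_iff continuous_cylToSphere.measurable.aemeasurable
    (isClosed_sphere.measurableSet.diff hKc.measurableSet)).2 ?_) d
  filter_upwards [ae_mem_cylinderMeasure_pi] with p hp
  exact cylToSphere_mem_S2_diff hK hp.1 hp.2

lemma hausdorffMeasure_restrict_S2_diff (hKc : IsClosed K) (hK : K ⊆ halfCircle) :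
    μH[(2 : ℝ)].restrict (S2 \ K) = μH[(2 : ℝ)].restrict S2 := by
  have hmeas : MeasurableSet (S2 \ K) :=
    isClosed_sphere.measurableSet.diff hKc.measurableSet
  rw [← Measure.restrict_eq_self_of_ae_mem (ae_mem_S2_diff hKc hK),
    Measure.restrict_restrict hmeas, inter_eq_self_of_subset_left sdiff_subset]

lemma measurable_indicator_of_continuousOn {X Y : Type*} [TopologicalSpace X] [MeasurableSpace X]
    [OpensMeasurableSpace X] [TopologicalSpace Y] [MeasurableSpace Y] [BorelSpace Y] [Zero Y]
    {f : X → Y} {S : Set X} (hf : ContinuousOn f S) (hS : MeasurableSet S) :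
    Measurable (S.indicator f) := by
  classical
  rw [← piecewise_eq_indicator]
  exact hf.measurable_piecewise continuousOn_const hS

lemma locallyLipschitzOn_congr {X Y : Type*} [PseudoEMetricSpace X] [PseudoEMetricSpace Y]
    {f h : X → Y} {S : Set X} (hf : LocallyLipschitzOn S f) (hfh : EqOn f h S) :
    LocallyLipschitzOn S h := fun _ hx ↦
  let ⟨C, t, ht, hC⟩ := hf hx
  ⟨C, t ∩ S, inter_mem ht self_mem_nhdsWithin, fun y hy z hz ↦ by
    rw [← hfh hy.2, ← hfh hz.2]
    exact hC hy.1 hz.1⟩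

lemma indicator_coneOver_smul (hhom : ∀ (x : Rn 3) (t : ℝ), 0 < t → g (t • x) = g x)
    (U : Set (Rn 3)) (x : Rn 3) {t : ℝ} (ht : 0 < t) :
    (coneOver U).indicator g (t • x) = (coneOver U).indicator g x := by
  classical
  simp only [indicator_apply, smul_mem_coneOver_iff ht, hhom x t ht]

lemma ofReal_mul_lintegral_sq_le_lintegral_gradient (hα : -1 ≤ α) (hβ : β ≤ 1)
    (hc : IsLegendreGapBound α β c) (hc1 : c ≤ 1) (hKc : IsClosed K) (hK : K ⊆ halfCircle)
    (hgap : ∀ s ∈ Ioo α β, cylToSphere Real.pi s ∉ K)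
    (hg : LocallyLipschitzOn (coneOver (S2 \ K)) g)
    (hhom : ∀ (x : Rn 3) (t : ℝ), 0 < t → g (t • x) = g x)
    (hfin : ∫⁻ y in S2, ENNReal.ofReal (g y ^ 2) ∂μH[(2 : ℝ)] ≠ ⊤)
    (hmean : ∫ y in S2, g y ∂μH[(2 : ℝ)] = 0) :
    ENNReal.ofReal c * ∫⁻ y in S2, ENNReal.ofReal (g y ^ 2) ∂μH[(2 : ℝ)] ≤
      ∫⁻ y in S2 \ K, ENNReal.ofReal (‖gradient g y‖ ^ 2) ∂μH[(2 : ℝ)] := by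
  -- `g` need not be measurable on the cone over `K`, so it is replaced by `0` there.
  set U := coneOver (S2 \ K)
  have hU : IsOpen U := isOpen_coneOver_S2_diff hKc
  have heq : EqOn g (U.indicator g) U := (eqOn_indicator (f := g)).symm
  have hae : g =ᵐ[μH[(2 : ℝ)].restrict S2] U.indicator g := by
    filter_upwards [ae_mem_S2_diff hKc hK] with x hx using heq (subset_coneOver hx)
  have hsq : ∫⁻ y in S2, ENNReal.ofReal (g y ^ 2) ∂μH[(2 : ℝ)] =
      ∫⁻ y in S2, ENNReal.ofReal (U.indicator g y ^ 2) ∂μH[(2 : ℝ)] :=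
    lintegral_congr_ae (hae.fun_comp fun r ↦ ENNReal.ofReal (r ^ 2))
  have hgrad : ∫⁻ y in S2 \ K, ENNReal.ofReal (‖gradient g y‖ ^ 2) ∂μH[(2 : ℝ)] =
      ∫⁻ y in S2, ENNReal.ofReal (‖gradient (U.indicator g) y‖ ^ 2) ∂μH[(2 : ℝ)] := by
    rw [hausdorffMeasure_restrict_S2_diff hKc hK]
    refine lintegral_congr_ae ?_
    filter_upwards [ae_mem_S2_diff hKc hK] with x hx
    rw [(heq.eventuallyEq_of_mem (hU.mem_nhds (subset_coneOver hx))).gradient_eq]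
  rw [hsq] at hfin ⊢
  rw [hgrad]
  exact ofReal_mul_lintegral_sq_le_lintegral_gradient_of_measurable hα hβ hc hc1 hKc hK hgap
    (measurable_indicator_of_continuousOn hg.continuousOn hU.measurableSet)
    (locallyLipschitzOn_congr hg heq) (fun x _ ↦ indicator_coneOver_smul hhom _ x) hfin
    ((integral_congr_ae hae).symm.trans hmean)

theorem ofReal_le_Lam (hα : -1 ≤ α) (hβ : β ≤ 1) (hc : IsLegendreGapBound α β c) (hc1 : c ≤ 1)
    (hKc : IsClosed K) (hK : K ⊆ halfCircle) (hgap : ∀ s ∈ Ioo α β, cylToSphere Real.pi s ∉ K) :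
    ENNReal.ofReal c ≤ Lam K := by
  refine le_sInf ?_
  rintro _ ⟨g, ⟨hhom, hg, hpos, hfin, -, hmean⟩, rfl⟩
  rw [ENNReal.le_div_iff_mul_le (Or.inl hpos.ne') (Or.inl hfin.ne)]
  exact ofReal_mul_lintegral_sq_le_lintegral_gradient hα hβ hc hc1 hKc hK hgap
    (locallyLipschitzOn_of_locLipOn hg) hhom hfin.ne hmean

lemma exists_eq_cylToSphere_pi_of_mem_halfCircle {x : Rn 3} (hx : x ∈ halfCircle) :
    ∃ s ∈ Icc (-1 : ℝ) 1, x = cylToSphere Real.pi s := by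
  obtain ⟨φ, hφ, h0, h1, h2⟩ := hx
  refine ⟨Real.sin φ, Real.sin_mem_Icc φ, ?_⟩
  ext i
  fin_cases i
  · simpa [cylToSphere, ← Real.cos_eq_sqrt_one_sub_sin_sq hφ.1 hφ.2] using h0
  · simpa [cylToSphere] using h1
  · simpa [cylToSphere] using h2

lemma exists_Ioo_cylToSphere_pi_notMem (hKc : IsClosed K) (hK : K ⊆ halfCircle)
    (hne : K ≠ halfCircle) :
    ∃ α β : ℝ, -1 ≤ α ∧ α < β ∧ β ≤ 1 ∧ ∀ s ∈ Ioo α β, cylToSphere Real.pi s ∉ K := by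
  obtain ⟨x, hx, hxK⟩ := exists_of_ssubset (hK.ssubset_of_ne hne)
  obtain ⟨s₀, hs₀, rfl⟩ := exists_eq_cylToSphere_pi_of_mem_halfCircle hx
  have hopen : IsOpen {s | cylToSphere Real.pi s ∉ K} :=
    hKc.isOpen_compl.preimage (continuous_cylToSphere.comp (Continuous.prodMk_right Real.pi))
  rw [← closure_Ioo (by norm_num)] at hs₀
  obtain ⟨α, β, hαβ, hsub⟩ :=
    (hopen.inter isOpen_Ioo).exists_Ioo_subset (mem_closure_iff.1 hs₀ _ hopen hxK)
  obtain ⟨hα, hβ⟩ := (Ioo_subset_Ioo_iff hαβ).1 (hsub.trans inter_subset_right)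
  exact ⟨α, β, hα, hαβ, hβ, fun s hs ↦ (hsub hs).1⟩

end Rigidity

/-- rigidity. If `K ⊆ E₀` is a closed subset of the half great circle
with `Λ(K) = 3/4`, then `K = E₀`. -/
theorem statement6 (K : Set (Rn 3)) (hKc : IsClosed K) (hK : K ⊆ halfCircle)
    (hlam : Lam K = ENNReal.ofReal (3 / 4)) : K = halfCircle := by
  by_contra hne
  obtain ⟨α, β, hα, hαβ, hβ, hgap⟩ := exists_Ioo_cylToSphere_pi_notMem hKc hK hne
  obtain ⟨δ, hδ, hδle, hbound⟩ := exists_isLegendreGapBound hα hαβ hβ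
  have hle := ofReal_le_Lam hα hβ hbound (by linarith) hKc hK hgap
  rw [hlam, ENNReal.ofReal_le_ofReal_iff (by norm_num)] at hle
  linarith
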